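/- arXiv:1511.09280 — 3 statements merged into one kernel-verified Lean document; each statement's English description precedes it below -/
import Mathlib

section
/- (Akin's theorem) Let X be a Cantor space and μ an atomless Borel probability measure on X with full support which is good, i.e., for any clopen sets A, B with μ(A) < μ(B) there exists a clopen C ⊆ B with μ(C) = μ(A). Then there exists a minimal homeomorphism g of X whose unique invariant Borel probability measure is μ. -/
/-!
Let `G` be the subgroup of `ℝ` generated by the measures of clopen sets. Goodness of `μ` means that
every `t ∈ G` with `0 ≤ t ≤ μ U`, `U` clopen, is the measure of a clopen subset of `U`
(`GoodMeasure.exists_subset`). Two cases are distinguished.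

*Every element of `G` is rational.* Every clopen partition can then be refined to a clopen partition
into `M` pieces of measure `1 / M` each, with `1 / M ∈ G` (`GoodMeasure.exists_cut`). A refining
sequence of such partitions that separates points identifies `X` with an odometer, on which
addition of `1` is minimal and permutes the pieces of each partition cyclically, so that an invariant
probability measure agrees with `μ` on the pieces (`GoodMeasure.odometer`).

*Some `a ∈ G` is irrational.* Goodness and countability of the clopen algebra provide an increasing
family of clopen sets `C t`, `t ∈ G ∩ [0, 1]`, with `μ (C t) = t`, that separates points
(`GoodMeasure.exists_scale`). Recording for each `t` whether `x ∈ C t`, and extending periodically,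
identifies `X` with the space of all monotone `F : G → ℤ` such that `F 0 = 0` and
`F (t + 1) = F t + 1` (`GoodMeasure.IsScale.homeo`); this is the circle with the points of `G / ℤ`
doubled. The homeomorphism `g` is the rotation `F ↦ F (· - a) - F (-a)`. Its orbits are dense because
`ℤ a + ℤ` is dense in `ℝ` (`GoodMeasure.IsScale.dense_orbit`). For a `g`-invariant probability
measure `ν`, the average `Φ` of the cuts `F` with respect to `ν` is monotone, stays at distance at
most `1` from the identity and satisfies `Φ (t + 1) = Φ t + 1` and `Φ (t + a) = Φ t + Φ a`. Hence
`Φ a = a`, so `Φ` is the identity on `ℤ a + ℤ`, and by monotonicity on `G` (`eq_self_of_rotation`).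
Thus `ν (C t) = t = μ (C t)` for all `t`, and the differences `C t \ C s` form a basis closed under
intersections, so `ν = μ`. Conversely the average cut of `g_* μ` is the identity, so `μ` is
invariant.
-/

open MeasureTheory

namespace DynSimplex

variable {X : Type*} [TopologicalSpace X] [MeasurableSpace X] [OpensMeasurableSpace X]

/-- `g` preserves the probability measure `μ`, i.e. `g_*μ = μ`. -/
def Preserves (g : X ≃ₜ X) (μ : ProbabilityMeasure X) : Prop :=
  (μ : Measure X).map g = (μ : Measure X)

/-- A homeomorphism is minimal if all of its (two-sided) orbits are dense. -/
def IsMinimal (g : X ≃ₜ X) : Prop :=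
  ∀ x : X, Dense (Set.range fun n : ℤ => (g.toEquiv ^ n) x)

/-- A set of probability measures is good if for all clopen `A`, `B` with `μ A < μ B` for
all `μ ∈ K`, there is a clopen `C ⊆ B` with `μ C = μ A` for all `μ ∈ K`. -/
def Good (K : Set (ProbabilityMeasure X)) : Prop :=
  ∀ A B : Set X, IsClopen A → IsClopen B → (∀ μ ∈ K, μ A < μ B) →
    ∃ C : Set X, IsClopen C ∧ C ⊆ B ∧ ∀ μ ∈ K, μ C = μ A

/-- Approximate divisibility of a set of probability measures. -/
def ApproximatelyDivisible (K : Set (ProbabilityMeasure X)) : Prop :=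
  ∀ A : Set X, IsClopen A → ∀ n : ℕ, 1 ≤ n → ∀ ε : ℝ, 0 < ε →
    ∃ B : Set X, IsClopen B ∧ B ⊆ A ∧
      ∀ μ ∈ K, (μ A : ℝ) - ε ≤ (n : ℝ) * (μ B : ℝ) ∧ (n : ℝ) * (μ B : ℝ) ≤ (μ A : ℝ)

/-- A probability measure has full support if every nonempty open set has positive measure. -/
def FullSupport (μ : ProbabilityMeasure X) : Prop :=
  ∀ U : Set X, IsOpen U → U.Nonempty → 0 < μ U

/-- A probability measure is atomless if all singletons are null. -/
def Atomless (μ : ProbabilityMeasure X) : Prop :=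
  ∀ x : X, μ {x} = 0

/-- Convexity of a set of probability measures (as a subset of the `ℝ≥0`-module of
finite measures). -/
def ProbConvex (K : Set (ProbabilityMeasure X)) : Prop :=
  Convex NNReal (ProbabilityMeasure.toFiniteMeasure '' K)

/-- The set of extreme points of a set of probability measures. -/
def ProbExtremePoints (K : Set (ProbabilityMeasure X)) : Set (ProbabilityMeasure X) :=
  ProbabilityMeasure.toFiniteMeasure ⁻¹'
    (Set.extremePoints NNReal (ProbabilityMeasure.toFiniteMeasure '' K))

/-- A dynamical simplex: a nonempty compact convex set of atomless, fully supported
probability measures which is good and approximately divisible. -/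
def DynamicalSimplex (K : Set (ProbabilityMeasure X)) : Prop :=
  K.Nonempty ∧ IsCompact K ∧ ProbConvex K ∧
    (∀ μ ∈ K, Atomless μ ∧ FullSupport μ) ∧ Good K ∧ ApproximatelyDivisible K

/-- Membership in the full group of `g`. -/
def InFullGroup (g h : X ≃ₜ X) : Prop :=
  ∀ x : X, ∃ n : ℤ, h x = (g.toEquiv ^ n) x

/-- Membership in the topological full group of `g`: `h` is given piecewise by powers of `g`
on a finite clopen partition of `X`. -/
def InTopologicalFullGroup (g h : X ≃ₜ X) : Prop :=
  ∃ (k : ℕ) (A : Fin k → Set X) (n : Fin k → ℤ),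
    (∀ i, IsClopen (A i)) ∧ (∀ x : X, ∃! i, x ∈ A i) ∧
    ∀ i, ∀ x ∈ A i, h x = (g.toEquiv ^ (n i)) x

/-- `g` preserves every measure in `K` (i.e. `g` belongs to the group `G`). -/
def PreservesAll (K : Set (ProbabilityMeasure X)) (g : X ≃ₜ X) : Prop :=
  ∀ μ ∈ K, Preserves g μ

/-- `g` is `K`-saturated: any two `K`-equivalent clopen sets are mapped one to the other by
an element of the topological full group of `g`. -/
def KSaturated (K : Set (ProbabilityMeasure X)) (g : X ≃ₜ X) : Prop :=
  ∀ U V : Set X, IsClopen U → IsClopen V → (∀ μ ∈ K, μ U = μ V) →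
    ∃ h : X ≃ₜ X, InTopologicalFullGroup g h ∧ h '' U = V

/-- The topology of uniform convergence on the homeomorphism group of a compact space
(the compact-open topology, induced from `C(X, X)`). -/
instance : TopologicalSpace (X ≃ₜ X) :=
  TopologicalSpace.induced (fun h : X ≃ₜ X => (h : C(X, X))) inferInstance

/-- A KR-partition for `K`: a finite family of columns, each column being a finite sequence of
clopen sets which are all `K`-equivalent, the atoms of all columns forming a partition of `X`. -/
structure KRPartition (X : Type*) [TopologicalSpace X] [MeasurableSpace X]
    (K : Set (ProbabilityMeasure X)) where
  numCols : ℕ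
  height : Fin numCols → ℕ
  atom : (i : Fin numCols) → Fin (height i + 1) → Set X
  clopen : ∀ i j, IsClopen (atom i j)
  equivK : ∀ i j j', ∀ μ ∈ K, μ (atom i j) = μ (atom i j')
  partition : ∀ x : X, ∃! p : (i : Fin numCols) × Fin (height i + 1), x ∈ atom p.1 p.2

/-- The base of a KR-partition: the union of the first atoms of the columns. -/
def KRPartition.base {K : Set (ProbabilityMeasure X)} (T : KRPartition X K) : Set X :=
  ⋃ i, T.atom i 0

/-- The top of a KR-partition: the union of the last atoms of the columns. -/
def KRPartition.top {K : Set (ProbabilityMeasure X)} (T : KRPartition X K) : Set X :=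
  ⋃ i, T.atom i (Fin.last _)

/-- `S` refines `T`: the base (resp. top) of `S` is contained in the base (resp. top) of `T`,
and every column of `S` is obtained by cutting and stacking columns of `T`. -/
def KRPartition.Refines {K : Set (ProbabilityMeasure X)} (S T : KRPartition X K) : Prop :=
  S.base ⊆ T.base ∧ S.top ⊆ T.top ∧
  ∀ c : Fin S.numCols, ∃ (m : ℕ) (idx : Fin (m + 1) → Fin T.numCols)
    (piece : (k : Fin (m + 1)) → Fin (T.height (idx k) + 1) → Set X),
    (∀ k j, piece k j ⊆ T.atom (idx k) j) ∧
    (S.height c + 1 = ∑ k : Fin (m + 1), (T.height (idx k) + 1)) ∧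
    ∀ (k : Fin (m + 1)) (j : Fin (T.height (idx k) + 1))
      (hlt : (∑ l ∈ Finset.Iio k, (T.height (idx l) + 1)) + (j : ℕ) < S.height c + 1),
      S.atom c ⟨(∑ l ∈ Finset.Iio k, (T.height (idx l) + 1)) + (j : ℕ), hlt⟩ = piece k j

/-- A KR-partition is compatible with a clopen set `U` if `U` is a union of its atoms,
equivalently every atom is either contained in `U` or disjoint from it. -/
def KRPartition.Compatible {K : Set (ProbabilityMeasure X)} (S : KRPartition X K)
    (U : Set X) : Prop :=
  ∀ i j, S.atom i j ⊆ U ∨ Disjoint (S.atom i j) U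

end DynSimplex

open TopologicalSpace Set

namespace AkinProof

set_option linter.unusedSectionVars false

lemma continuous_ite_clopen {X : Type*} [TopologicalSpace X] {W : Set X}
    [DecidablePred (· ∈ W)] (hW : IsClopen W) {Y : Type*} [TopologicalSpace Y] {f g : X → Y} (hf : Continuous f) (hg : Continuous g) :
    Continuous (fun x => if x ∈ W then f x else g x) := by
  refine continuous_if ?_ hf.continuousOn hg.continuousOn
  intro a ha
  rw [show {x | x ∈ W} = W from rfl, hW.frontier_eq] at ha
  exact ha.elim

variable {X : Type*} [TopologicalSpace X] [MeasurableSpace X] [BorelSpace X]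

/-! ### Good measures and their group of clopen values -/

/-- The part of the hypotheses on `μ` that the argument uses, phrased with real-valued measures of
clopen sets: nonempty clopen sets have positive measure, and `μ` is good. -/
structure GoodMeasure (μ : Measure X) : Prop where
  pos : ∀ A : Set X, IsClopen A → A.Nonempty → 0 < μ.real A
  good : ∀ A B : Set X, IsClopen A → IsClopen B → μ.real A < μ.real B →
    ∃ C : Set X, IsClopen C ∧ C ⊆ B ∧ μ.real C = μ.real A

variable {μ : Measure X} [IsProbabilityMeasure μ]

lemma real_sdiff {A B : Set X} (hB : IsClopen B) (h : B ⊆ A) :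
    μ.real (A \ B) = μ.real A - μ.real B :=
  measureReal_sdiff h hB.isOpen.measurableSet

/-- Nested clopen sets of equal measure coincide, by full support. -/
lemma GoodMeasure.eq_of_subset (h : GoodMeasure μ) {A B : Set X} (hA : IsClopen A)
    (hB : IsClopen B) (hAB : A ⊆ B) (hm : μ.real B ≤ μ.real A) : A = B := by
  refine hAB.antisymm ?_
  by_contra hne
  have := h.pos _ (hB.diff hA) (sdiff_nonempty.mpr hne)
  rw [real_sdiff hA hAB] at this
  linarith

/-- The subgroup `G` of `ℝ` generated by the measures of clopen sets. Since `1 = μ X`, it can be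
described as the set of reals whose fractional part is the measure of a clopen set. -/
def GoodMeasure.valueGroup (h : GoodMeasure μ) : AddSubgroup ℝ where
  carrier := {t | ∃ A : Set X, IsClopen A ∧ μ.real A = Int.fract t}
  zero_mem' := ⟨∅, isClopen_empty, by simp⟩
  neg_mem' := by
    rintro t ⟨A, hA, hAt⟩
    by_cases h0 : Int.fract t = 0
    · refine ⟨∅, isClopen_empty, ?_⟩
      simp [Int.fract_neg_eq_zero.mpr h0]
    · exact ⟨Aᶜ, hA.compl, by
        rw [probReal_compl_eq_one_sub hA.isOpen.measurableSet, Int.fract_neg h0, hAt]⟩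
  add_mem' := by
    rintro a b ⟨A, hA, ha⟩ ⟨B, hB, hb⟩
    have hA1 := probReal_compl_eq_one_sub (μ := μ) hA.isOpen.measurableSet
    have key : ∀ r : ℝ, 0 ≤ r → r < 1 → (∃ z : ℤ, Int.fract a + Int.fract b - r = z) →
        Int.fract (a + b) = r := by
      rintro r h0 h1 ⟨z, hz⟩
      refine Int.fract_eq_iff.mpr ⟨h0, h1, z + ⌊a⌋ + ⌊b⌋, ?_⟩
      push_cast
      rw [← hz, Int.fract, Int.fract]
      ring
    rcases lt_trichotomy (Int.fract a + Int.fract b) 1 with hlt | heq | hgt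
    · obtain ⟨C, hC, hCA, hCB⟩ := h.good B Aᶜ hB hA.compl (by rw [hA1, ha, hb]; linarith)
      refine ⟨A ∪ C, hA.union hC, ?_⟩
      rw [measureReal_union (disjoint_left.mpr fun x hx hx' => hCA hx' hx) hC.isOpen.measurableSet, hCB,
        ha, hb, key _ (by positivity) hlt ⟨0, by simp⟩]
    · exact ⟨∅, isClopen_empty, by rw [key 0 le_rfl one_pos ⟨1, by simp [heq]⟩]; simp⟩
    · obtain ⟨C, hC, hCB, hCA⟩ := h.good Aᶜ B hA.compl hB (by rw [hA1, ha, hb]; linarith)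
      refine ⟨B \ C, hB.diff hC, ?_⟩
      have := Int.fract_lt_one a
      have := Int.fract_lt_one b
      rw [real_sdiff hC hCB, hCA, hA1, ha, hb, key (Int.fract a + Int.fract b - 1) (by linarith)
        (by linarith) ⟨1, by simp⟩]
      ring

lemma GoodMeasure.real_mem (h : GoodMeasure μ) {A : Set X} (hA : IsClopen A) :
    μ.real A ∈ h.valueGroup := by
  rcases eq_or_lt_of_le (measureReal_le_one (μ := μ) (s := A)) with h1 | h1
  · exact ⟨∅, isClopen_empty, by simp [h1]⟩
  · exact ⟨A, hA, (Int.fract_eq_self.mpr ⟨measureReal_nonneg, h1⟩).symm⟩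

lemma GoodMeasure.one_mem (h : GoodMeasure μ) : (1 : ℝ) ∈ h.valueGroup := by
  simpa using h.real_mem isClopen_univ

/-- Every clopen set contains clopen subsets of all smaller measures in the value group. -/
lemma GoodMeasure.exists_subset (h : GoodMeasure μ) {U : Set X} (hU : IsClopen U) {t : ℝ}
    (ht : t ∈ h.valueGroup) (h0 : 0 ≤ t) (htU : t ≤ μ.real U) :
    ∃ C : Set X, IsClopen C ∧ C ⊆ U ∧ μ.real C = t := by
  rcases eq_or_lt_of_le htU with rfl | hlt
  · exact ⟨U, hU, subset_rfl, rfl⟩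
  · obtain ⟨A, hA, hAt⟩ := ht
    rw [Int.fract_eq_self.mpr ⟨h0, hlt.trans_le measureReal_le_one⟩] at hAt
    subst hAt
    exact h.good A U hA hU hlt

/-- A probability measure is determined by its values on a basis stable under intersections. -/
lemma ext_of_basis [SecondCountableTopology X] {𝓑 : Set (Set X)} (hb : IsTopologicalBasis 𝓑)
    (hpi : IsPiSystem 𝓑) {ν ν' : Measure X} [IsProbabilityMeasure ν] [IsProbabilityMeasure ν']
    (heq : ∀ B ∈ 𝓑, ν.real B = ν'.real B) : ν = ν' := by
  refine ext_of_generate_finite 𝓑 ?_ hpi (fun B hB => ?_) (by simp)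
  · rw [← hb.borel_eq_generateFrom]
    exact BorelSpace.measurable_eq
  · exact (measureReal_eq_measureReal_iff).mp (heq B hB)

/-! ### Rational clopen values: an odometer -/

open scoped Classical in
/-- If `1 / M` is a clopen value and `U`, `U ∩ W` have measures in `(1 / M) ℕ`, then `U` can be cut
into clopen pieces of measure `1 / M`, each contained in `W` or disjoint from it. -/
lemma GoodMeasure.exists_cut (h : GoodMeasure μ) {M : ℕ} (hM : 0 < M)
    (hMG : (1 / M : ℝ) ∈ h.valueGroup) {W : Set X} (hW : IsClopen W) (m : ℕ) :
    ∀ U : Set X, IsClopen U → μ.real U = m / M → (∃ a : ℕ, μ.real (U ∩ W) = a / M) →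
      ∃ p : X → ℕ, Continuous p ∧ (∀ x ∈ U, p x < m) ∧
        (∀ i < m, μ.real (U ∩ p ⁻¹' {i}) = 1 / M) ∧
        ∀ x ∈ U, ∀ y ∈ U, p x = p y → (x ∈ W ↔ y ∈ W) := by
  have hM' : (0 : ℝ) < M := by exact_mod_cast hM
  induction m with
  | zero =>
    intro U hU hUm _
    have hUe : ¬ U.Nonempty := fun hne => by
      have := h.pos U hU hne
      simp [hUm] at this
    rw [not_nonempty_iff_eq_empty] at hUe
    subst hUe
    exact ⟨fun _ => 0, continuous_const, by simp, by simp, by simp⟩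
  | succ m ih =>
    rintro U hU hUm ⟨a, ha⟩
    -- A piece `D` of measure `1 / M` inside `U ∩ W`, or inside `U` if `U ∩ W` is empty.
    obtain ⟨D, hD, hDU, hDm, hDW, b, hb⟩ : ∃ D : Set X, IsClopen D ∧ D ⊆ U ∧ μ.real D = 1 / M ∧
        (∀ x ∈ D, ∀ y ∈ D, (x ∈ W ↔ y ∈ W)) ∧ ∃ b : ℕ, μ.real ((U \ D) ∩ W) = b / M := by
      rcases a with _ | a
      · have hUW : ¬ (U ∩ W).Nonempty := fun hne => by
          have := h.pos _ (hU.inter hW) hne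
          simp [ha] at this
        obtain ⟨D, hD, hDU, hDm⟩ := h.exists_subset hU hMG (by positivity) (by
          rw [hUm]; gcongr; simp)
        have hDW : ∀ x ∈ U, x ∉ W := fun x hx hxW => hUW ⟨x, hx, hxW⟩
        refine ⟨D, hD, hDU, hDm, fun x hx y hy => ?_, 0, ?_⟩
        · simp [hDW x (hDU hx), hDW y (hDU hy)]
        · have : (U \ D) ∩ W = ∅ := by
            ext x; simp only [mem_inter_iff, mem_sdiff, mem_empty_iff_false, iff_false]
            exact fun hx => hDW x hx.1.1 hx.2
          simp [this]
      · obtain ⟨D, hD, hDU, hDm⟩ := h.exists_subset (hU.inter hW) hMG (by positivity) (by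
          rw [ha]; gcongr; simp)
        refine ⟨D, hD, fun x hx => (hDU hx).1, hDm, fun x hx y hy => ?_, a, ?_⟩
        · simp [(hDU hx).2, (hDU hy).2]
        · have : (U \ D) ∩ W = (U ∩ W) \ D := by ext x; simp; tauto
          rw [this, real_sdiff hD hDU, ha, hDm]
          push_cast
          ring
    obtain ⟨p, hpc, hp1, hp2, hp3⟩ := ih (U \ D) (hU.diff hD) (by
      rw [real_sdiff hD hDU, hUm, hDm]; push_cast; ring) ⟨b, hb⟩
    refine ⟨fun x => if x ∈ D then m else p x, continuous_ite_clopen hD continuous_const hpc,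
      fun x hx => ?_, fun i hi => ?_, fun x hx y hy => ?_⟩
    · by_cases hxD : x ∈ D
      · simp [hxD]
      · simpa [hxD] using (hp1 x ⟨hx, hxD⟩).trans (Nat.lt_succ_self m)
    · rcases (Nat.lt_succ_iff_lt_or_eq.mp hi) with hi | rfl
      · rw [← hp2 i hi]
        congr 1
        ext x
        by_cases hxD : x ∈ D
        · simp [hxD, hi.ne']
        · simp [hxD]
      · rw [← hDm]
        congr 1
        ext x
        by_cases hxD : x ∈ D
        · simp [hxD, hDU hxD]
        · simp only [mem_inter_iff, mem_preimage, hxD, if_false, mem_singleton_iff, iff_false]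
          exact fun hx => (hp1 x ⟨hx.1, hxD⟩).ne hx.2
    · by_cases hxD : x ∈ D <;> by_cases hyD : y ∈ D
      · exact fun _ => hDW x hxD y hyD
      · have := hp1 y ⟨hy, hyD⟩
        simp only [hxD, hyD, if_true, if_false]
        omega
      · have := hp1 x ⟨hx, hxD⟩
        simp only [hxD, hyD, if_true, if_false]
        omega
      · simpa [hxD, hyD] using hp3 x ⟨hx, hxD⟩ y ⟨hy, hyD⟩

section ArithmeticOfGroup

variable {G : AddSubgroup ℝ}

lemma one_div_lcm_mem {a b : ℕ} (ha : 0 < a) (hb : 0 < b) (haG : (1 / a : ℝ) ∈ G)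
    (hbG : (1 / b : ℝ) ∈ G) : (1 / (a.lcm b : ℕ) : ℝ) ∈ G := by
  have hmem := G.add_mem (G.zsmul_mem hbG (a.gcdA b)) (G.zsmul_mem haG (a.gcdB b))
  convert! hmem using 1
  have ha' : (a : ℝ) ≠ 0 := by positivity
  have hb' : (b : ℝ) ≠ 0 := by positivity
  have hl : ((a.lcm b : ℕ) : ℝ) ≠ 0 := by exact_mod_cast (Nat.lcm_pos ha hb).ne'
  have h1 : ((a.gcd b : ℕ) : ℝ) = a * (a.gcdA b : ℤ) + b * (a.gcdB b : ℤ) := by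
    exact_mod_cast congrArg (fun z : ℤ => (z : ℝ)) (Nat.gcd_eq_gcd_ab a b)
  have h2 : ((a.gcd b : ℕ) : ℝ) * (a.lcm b : ℕ) = a * b := by
    exact_mod_cast congrArg (fun z : ℕ => (z : ℝ)) (Nat.gcd_mul_lcm a b)
  simp only [zsmul_eq_mul]
  rw [div_eq_iff hl]
  field_simp
  rw [h1] at h2
  linarith

lemma one_div_den_mem (h1 : (1 : ℝ) ∈ G) (q : ℚ) (hq : (q : ℝ) ∈ G) : (1 / q.den : ℝ) ∈ G := by
  have hco : IsCoprime q.num (q.den : ℤ) := by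
    rw [Int.isCoprime_iff_gcd_eq_one]
    exact q.reduced
  obtain ⟨u, v, huv⟩ := hco
  have hmem := G.add_mem (G.zsmul_mem hq u) (G.zsmul_mem h1 v)
  convert! hmem using 1
  have hd : (q.den : ℝ) ≠ 0 := by exact_mod_cast q.den_nz
  have huv' : (u : ℝ) * q.num + v * q.den = 1 := by exact_mod_cast huv
  have hqd : (q : ℝ) = q.num / q.den := by exact_mod_cast (Rat.num_div_den q).symm
  simp only [zsmul_eq_mul]
  rw [hqd]
  field_simp
  linarith

/-- In a group of rationals containing `1`, finitely many elements have a common denominator `M`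
with `1 / M` in the group. -/
lemma exists_common_den (h1 : (1 : ℝ) ∈ G) (hrat : ∀ t ∈ G, ¬ Irrational t) {N : ℕ} (hN : 0 < N)
    (hNG : (1 / N : ℝ) ∈ G) (t : ℕ → ℝ) (ht : ∀ j, t j ∈ G) (k : ℕ) :
    ∃ M : ℕ, 0 < M ∧ N ∣ M ∧ (1 / M : ℝ) ∈ G ∧ ∀ j < k, ∃ a : ℤ, t j = a / M := by
  induction k with
  | zero => exact ⟨N, hN, dvd_rfl, hNG, by simp⟩
  | succ k ih =>
    obtain ⟨M, hM, hNM, hMG, hM'⟩ := ih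
    obtain ⟨q, hq⟩ : ∃ q : ℚ, (q : ℝ) = t k := by
      simpa [Irrational] using hrat _ (ht k)
    have hdG := one_div_den_mem h1 q (hq ▸ ht k)
    have hpos := Nat.lcm_pos hM q.den_pos
    have key : ∀ (c : ℕ) (a : ℤ), 0 < c → c ∣ M.lcm q.den →
        ∃ b : ℤ, (a / c : ℝ) = b / (M.lcm q.den : ℕ) := by
      rintro c a hc ⟨e, he⟩
      have he0 : e ≠ 0 := by
        rintro rfl
        omega
      have hc' : (c : ℝ) ≠ 0 := by positivity
      have he' : (e : ℝ) ≠ 0 := by positivity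
      refine ⟨a * e, ?_⟩
      rw [he]
      push_cast
      field_simp
    refine ⟨M.lcm q.den, hpos, hNM.trans (Nat.dvd_lcm_left _ _),
      one_div_lcm_mem hM q.den_pos hMG hdG, fun j hj => ?_⟩
    rcases Nat.lt_succ_iff_lt_or_eq.mp hj with hj | rfl
    · obtain ⟨a, ha⟩ := hM' j hj
      rw [ha]
      exact key M a hM (Nat.dvd_lcm_left _ _)
    · have hqd : (q : ℝ) = q.num / q.den := by exact_mod_cast (Rat.num_div_den q).symm
      rw [← hq, hqd]
      exact key _ _ q.den_pos (Nat.dvd_lcm_right _ _)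

end ArithmeticOfGroup

/-- A cyclic clopen partition of `X`: the fibres of a continuous labelling by `0, …, N - 1`, all of
measure `1 / N`. -/
structure CyclicPartition (μ : Measure X) where
  /-- the number of pieces -/
  N : ℕ
  /-- the labelling -/
  lab : X → ℕ
  pos : 0 < N
  cont : Continuous lab
  lt : ∀ x, lab x < N
  meas : ∀ i < N, μ.real (lab ⁻¹' {i}) = 1 / N

/-- A cyclic partition can be refined, compatibly with reduction of labels modulo `N`, so that a
given clopen set becomes a union of pieces. -/
lemma GoodMeasure.refine_cyclic (h : GoodMeasure μ) (hrat : ∀ t ∈ h.valueGroup, ¬ Irrational t)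
    (P : CyclicPartition μ) {W : Set X} (hW : IsClopen W) :
    ∃ Q : CyclicPartition μ, P.N ∣ Q.N ∧ (∀ x, Q.lab x % P.N = P.lab x) ∧
      ∀ x y, Q.lab x = Q.lab y → (x ∈ W ↔ y ∈ W) := by
  have hcl : ∀ j, IsClopen (P.lab ⁻¹' {j}) := fun j => (isClopen_discrete _).preimage P.cont
  have hNG : (1 / P.N : ℝ) ∈ h.valueGroup := by
    rw [← P.meas 0 P.pos]
    exact h.real_mem (hcl 0)
  obtain ⟨M, hM, ⟨m, hm⟩, hMG, ha⟩ := exists_common_den h.one_mem hrat P.pos hNG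
    (fun j => μ.real (P.lab ⁻¹' {j} ∩ W)) (fun j => h.real_mem ((hcl j).inter hW)) P.N
  have hM' : (0 : ℝ) < M := by exact_mod_cast hM
  have hm0 : m ≠ 0 := by
    rintro rfl
    omega
  have hN0 : (P.N : ℝ) ≠ 0 := by exact_mod_cast P.pos.ne'
  have hcut : ∀ j, ∃ p : X → ℕ, j < P.N → Continuous p ∧ (∀ x ∈ P.lab ⁻¹' {j}, p x < m) ∧
        (∀ i < m, μ.real (P.lab ⁻¹' {j} ∩ p ⁻¹' {i}) = 1 / M) ∧
        ∀ x ∈ P.lab ⁻¹' {j}, ∀ y ∈ P.lab ⁻¹' {j}, p x = p y → (x ∈ W ↔ y ∈ W) := by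
    intro j
    by_cases hj : j < P.N
    · obtain ⟨a, haj⟩ := ha j hj
      have ha0 : 0 ≤ a := by
        have : (0 : ℝ) ≤ a / M := haj ▸ measureReal_nonneg
        rw [le_div_iff₀ hM', zero_mul] at this
        exact_mod_cast this
      lift a to ℕ using ha0
      obtain ⟨p, hp⟩ := h.exists_cut hM hMG hW m (P.lab ⁻¹' {j}) (hcl j) (by
        have hm0' : (m : ℝ) ≠ 0 := by exact_mod_cast hm0
        rw [P.meas j hj, hm]; push_cast; field_simp) ⟨a, by simpa using haj⟩
      exact ⟨p, fun _ => hp⟩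
    · exact ⟨fun _ => 0, fun hj' => (hj hj').elim⟩
  choose p hp using hcut
  have hdecomp : ∀ x, (P.lab x + P.N * p (P.lab x) x) % P.N = P.lab x := fun x => by
    rw [Nat.add_mul_mod_self_left, Nat.mod_eq_of_lt (P.lt x)]
  have hdecomp' : ∀ x, (P.lab x + P.N * p (P.lab x) x) / P.N = p (P.lab x) x := fun x => by
    rw [Nat.add_mul_div_left _ _ P.pos, Nat.div_eq_of_lt (P.lt x), zero_add]
  refine ⟨⟨M, fun x => P.lab x + P.N * p (P.lab x) x, hM, ?_, fun x => ?_, fun i hi => ?_⟩,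
    ⟨m, hm⟩, hdecomp, fun x y hxy => ?_⟩
  · -- On the clopen set where `lab` takes the value `j`, the new labelling is `j + N * p j`.
    rw [continuous_iff_continuousAt]
    intro x
    have hx : P.lab ⁻¹' {P.lab x} ∈ nhds x := (hcl _).isOpen.mem_nhds rfl
    have hc : Continuous fun y => P.lab y + P.N * p (P.lab x) y :=
      P.cont.add (continuous_const.mul (hp _ (P.lt x)).1)
    refine hc.continuousAt.congr ?_
    filter_upwards [hx] with y hy
    simp only [mem_preimage, mem_singleton_iff] at hy
    rw [hy]
  · have h1 := P.lt x
    have h2 := (hp _ (P.lt x)).2.1 x rfl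
    rw [hm]
    calc P.lab x + P.N * p (P.lab x) x < P.N * (p (P.lab x) x + 1) := by rw [mul_add]; omega
      _ ≤ P.N * m := Nat.mul_le_mul_left _ h2
  · have hj := Nat.mod_lt i P.pos
    have hq : i / P.N < m := Nat.div_lt_of_lt_mul (hm ▸ hi)
    rw [← (hp _ hj).2.2.1 _ hq]
    congr 1
    ext x
    simp only [mem_preimage, mem_singleton_iff, mem_inter_iff]
    constructor
    · rintro rfl
      rw [hdecomp, hdecomp']
      exact ⟨rfl, rfl⟩
    · rintro ⟨hx1, hx2⟩
      rw [hx1, hx2, Nat.mod_add_div]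
  · have e1 := congrArg (· % P.N) hxy
    have e2 := congrArg (· / P.N) hxy
    simp only [hdecomp, hdecomp'] at e1 e2
    exact (hp _ (P.lt x)).2.2.2 x rfl y e1.symm (by rw [e2, e1])

/-- The conclusion of the theorem, for a measure `μ`. -/
def HasUniquelyErgodicMinimal (μ : Measure X) : Prop :=
  ∃ g : X ≃ₜ X, (∀ x : X, Dense (range fun n : ℤ => (g.toEquiv ^ n) x)) ∧
    μ.map g = μ ∧ ∀ ν : Measure X, IsProbabilityMeasure ν → ν.map g = ν → ν = μ

lemma zpow_natCast_succ_apply (g : X ≃ₜ X) (n : ℕ) (x : X) :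
    (g.toEquiv ^ ((n + 1 : ℕ) : ℤ)) x = g ((g.toEquiv ^ (n : ℤ)) x) := by
  rw [zpow_natCast, zpow_natCast, pow_succ']
  rfl

/-- If all clopen values are rational, then `X` is an inverse limit of cyclic groups `ℤ / N k`, the
fibres of `X → ℤ / N k` having measure `1 / N k`, and adding `1` has the required properties. -/
theorem GoodMeasure.odometer [CompactSpace X] [T2Space X] [SecondCountableTopology X]
    [TotallyDisconnectedSpace X] (h : GoodMeasure μ)
    (hrat : ∀ t ∈ h.valueGroup, ¬ Irrational t) : HasUniquelyErgodicMinimal μ := by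
  have : Countable (Clopens X) := Clopens.countable_iff_secondCountable.mpr inferInstance
  obtain ⟨W, hW⟩ := exists_surjective_nat (Clopens X)
  choose ref hdvd hmod hsep using fun (P : CyclicPartition μ) (k : ℕ) =>
    h.refine_cyclic hrat P (W k).isClopen
  let P0 : CyclicPartition μ := ⟨1, fun _ => 0, one_pos, continuous_const, fun _ => one_pos, by
    intro i hi
    obtain rfl : i = 0 := by omega
    simp⟩
  let P : ℕ → CyclicPartition μ := fun k => Nat.rec P0 (fun k Q => ref Q k) k
  have hPs : ∀ k, P (k + 1) = ref (P k) k := fun k => rfl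
  have hd : ∀ k, (P k).N ∣ (P (k + 1)).N := fun k => hdvd (P k) k
  have hm : ∀ k x, (P (k + 1)).lab x % (P k).N = (P k).lab x := fun k x => hmod (P k) k x
  have hs : ∀ k x y, (P (k + 1)).lab x = (P (k + 1)).lab y → (x ∈ W k ↔ y ∈ W k) :=
    fun k x y => hsep (P k) k x y
  have hne : ∀ k, NeZero (P k).N := fun k => ⟨(P k).pos.ne'⟩
  let Y := {y : ∀ k, ZMod (P k).N // ∀ k, ZMod.castHom (hd k) (ZMod (P k).N) (y (k + 1)) = y k}
  let c : ∀ k, X → ZMod (P k).N := fun k x => ((P k).lab x : ZMod (P k).N)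
  have hcc : ∀ k, Continuous (c k) := fun k => continuous_of_discreteTopology.comp (P k).cont
  have hcval : ∀ k x, (c k x).val = (P k).lab x := fun k x => ZMod.val_natCast_of_lt ((P k).lt x)
  have hcinj : ∀ k x y, c k x = c k y ↔ (P k).lab x = (P k).lab y := fun k x y =>
    ⟨fun hxy => by rw [← hcval, ← hcval, hxy], fun hxy => by simp only [c, hxy]⟩
  have hcsucc : ∀ k x, ZMod.castHom (hd k) (ZMod (P k).N) (c (k + 1) x) = c k x := fun k x => by
    simp only [c, map_natCast, ← hm k x, ZMod.natCast_mod]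
  have hcμ : ∀ k j, μ.real (c k ⁻¹' {j}) = 1 / (P k).N := fun k j => by
    rw [← (P k).meas j.val (ZMod.val_lt j)]
    congr 1
    ext x
    simp only [mem_preimage, mem_singleton_iff, ← hcval]
    exact ⟨fun hx => by rw [hx], fun hx => ZMod.val_injective _ hx⟩
  let e : X → Y := fun x => ⟨fun k => c k x, fun k => hcsucc k x⟩
  have hec : Continuous e := (continuous_pi hcc).subtype_mk _
  have hei : Function.Injective e := by
    intro x y hxy
    by_contra hne
    obtain ⟨U, hU, hxU, hyU⟩ := exists_isClopen_of_totally_separated hne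
    obtain ⟨k, hk⟩ := hW ⟨U, hU⟩
    have h1 : c (k + 1) x = c (k + 1) y := congrFun (congrArg Subtype.val hxy) (k + 1)
    have h2 := hs k x y ((hcinj (k + 1) x y).mp h1)
    rw [hk] at h2
    exact hyU (h2.mp hxU)
  have hes : Function.Surjective e := by
    rintro ⟨y, hy⟩
    have hcl : ∀ k, IsClosed (c k ⁻¹' {y k}) := fun k => isClosed_discrete _ |>.preimage (hcc k)
    obtain ⟨x, hx⟩ := IsCompact.nonempty_iInter_of_sequence_nonempty_isCompact_isClosed
      (fun k => c k ⁻¹' {y k}) (fun k x hx => by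
        simp only [mem_preimage, mem_singleton_iff] at hx ⊢
        rw [← hcsucc, hx, hy]) (fun k => by
        by_contra hemp
        rw [not_nonempty_iff_eq_empty] at hemp
        have h1 := hcμ k (y k)
        rw [hemp, measureReal_empty] at h1
        have : (0 : ℝ) < (P k).N := by exact_mod_cast (P k).pos
        have : (0 : ℝ) < 1 / (P k).N := by positivity
        linarith) (hcl 0).isCompact hcl
    exact ⟨x, Subtype.ext (funext fun k => mem_iInter.mp hx k)⟩
  let E : X ≃ₜ Y := Continuous.homeoOfEquivCompactToT2 (f := Equiv.ofBijective e ⟨hei, hes⟩) hec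
  let T : Y ≃ₜ Y := (Homeomorph.addRight (1 : ∀ k, ZMod (P k).N)).subtype fun y => by
    refine forall_congr' fun k => ?_
    simp only [Homeomorph.coe_addRight, Pi.add_apply, Pi.one_apply, map_add, map_one, add_left_inj]
  let g : X ≃ₜ X := (E.trans T).trans E.symm
  have hg : ∀ k x, c k (g x) = c k x + 1 := fun k x => by
    have h1 : E (g x) = T (E x) := E.apply_symm_apply _
    exact congrFun (congrArg Subtype.val h1) k
  -- Clopen sets are unions of fibres of some `c k`.
  have hclopen : ∀ U : Set X, IsClopen U → ∃ k, ∀ x y, c k x = c k y → (x ∈ U ↔ y ∈ U) := by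
    intro U hU
    obtain ⟨k, hk⟩ := hW ⟨U, hU⟩
    refine ⟨k + 1, fun x y hxy => ?_⟩
    have := hs k x y ((hcinj (k + 1) x y).mp hxy)
    rwa [hk] at this
  have hext : ∀ ν : Measure X, IsProbabilityMeasure ν →
      (∀ k j, ν.real (c k ⁻¹' {j}) = 1 / (P k).N) → ν = μ := by
    intro ν _ hν
    refine ext_of_basis isTopologicalBasis_isClopen (fun A hA B hB _ => hA.inter hB) ?_
    intro U hU
    obtain ⟨k, hk⟩ := hclopen U hU
    classical
    have hUe : U = c k ⁻¹' ((c k '' U).toFinset : Set _) := by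
      rw [coe_toFinset]
      refine (subset_preimage_image _ _).antisymm ?_
      rintro x ⟨y, hy, hyx⟩
      exact (hk y x hyx).mp hy
    have hmeas : ∀ j, MeasurableSet (c k ⁻¹' {j}) := fun j =>
      ((isOpen_discrete _).preimage (hcc k)).measurableSet
    rw [hUe, ← sum_measureReal_preimage_singleton _ (fun j _ => hmeas j),
      ← sum_measureReal_preimage_singleton _ (fun j _ => hmeas j)]
    exact Finset.sum_congr rfl fun j _ => by rw [hν, hcμ]
  have hpre : ∀ k j, g ⁻¹' (c k ⁻¹' {j + 1}) = c k ⁻¹' {j} := fun k j => by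
    ext x
    simp [hg]
  have hmap : ∀ (ν : Measure X) (k) (j : ZMod (P k).N),
      (ν.map g).real (c k ⁻¹' {j + 1}) = ν.real (c k ⁻¹' {j}) := fun ν k j => by
    rw [map_measureReal_apply g.continuous.measurable
      ((isOpen_discrete _).preimage (hcc k)).measurableSet, hpre]
  refine ⟨g, fun x => ?_, ?_, fun ν _ hν => ?_⟩
  · rw [isTopologicalBasis_isClopen.dense_iff]
    rintro U hU ⟨y, hy⟩
    obtain ⟨k, hk⟩ := hclopen U hU
    have hiter : ∀ n : ℕ, c k ((g.toEquiv ^ (n : ℤ)) x) = c k x + n := by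
      intro n
      induction n with
      | zero => simp
      | succ n ih => rw [zpow_natCast_succ_apply, hg, ih]; push_cast; ring
    refine ⟨_, (hk y _ ?_).mp hy, ((c k y - c k x).val : ℤ), rfl⟩
    rw [hiter, ZMod.natCast_zmod_val]
    ring
  · have : IsProbabilityMeasure (μ.map g) :=
      Measure.isProbabilityMeasure_map g.continuous.aemeasurable
    refine hext _ this fun k j => ?_
    rw [← hcμ k (j - 1), ← hmap μ k (j - 1), sub_add_cancel]
  · refine hext ν inferInstance fun k => ?_
    have hstep : ∀ j, ν.real (c k ⁻¹' {j + 1}) = ν.real (c k ⁻¹' {j}) := fun j => by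
      rw [← hmap ν k j, hν]
    have hconst : ∀ j : ZMod (P k).N, ν.real (c k ⁻¹' {j}) = ν.real (c k ⁻¹' {0}) := by
      intro j
      rw [← ZMod.natCast_zmod_val j]
      induction j.val with
      | zero => simp
      | succ n ih => rw [Nat.cast_succ, hstep, ih]
    have hsum := sum_measureReal_preimage_singleton (μ := ν) (Finset.univ : Finset (ZMod (P k).N))
      (f := c k) (fun j _ => ((isOpen_discrete _).preimage (hcc k)).measurableSet)
    simp only [hconst, Finset.sum_const, Finset.card_univ, ZMod.card, Finset.coe_univ,
      preimage_univ, probReal_univ, nsmul_eq_mul] at hsum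
    have hN0 : ((P k).N : ℝ) ≠ 0 := by exact_mod_cast (P k).pos.ne'
    intro j
    rw [hconst, eq_div_iff hN0, mul_comm, hsum]

/-! ### A chain of clopen sets realizing all clopen values -/

open scoped Classical in
/-- A continuous labelling `f : X → ℕ` can be refined monotonically so that it separates the points
of `W` from those of its complement and some initial segment `D` of labels has measure `μ W`. -/
lemma GoodMeasure.refine_label [CompactSpace X] (h : GoodMeasure μ) {f : X → ℕ} (hf : Continuous f)
    {W : Set X} (hW : IsClopen W) :
    ∃ f' : X → ℕ, Continuous f' ∧ (∀ x y, f x < f y → f' x < f' y) ∧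
      (∀ x y, f' x = f' y → (x ∈ W ↔ y ∈ W)) ∧
      ∃ D : Set X, IsClopen D ∧ (∀ x ∈ D, ∀ y, f' y ≤ f' x → y ∈ D) ∧ μ.real D = μ.real W := by
  have hcl : ∀ s : Set ℕ, IsClopen (f ⁻¹' s) := fun s => (isClopen_discrete s).preimage hf
  -- `D` consists of the labels below `i` and of part of the piece with label `i`.
  obtain ⟨i, hi1, hi2⟩ : ∃ i, μ.real (f ⁻¹' Iio i) ≤ μ.real W ∧
      μ.real W ≤ μ.real (f ⁻¹' Iic i) := by
    have hex : ∃ i, μ.real W ≤ μ.real (f ⁻¹' Iic i) := by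
      obtain ⟨b, hb⟩ := (isCompact_range hf).bddAbove
      refine ⟨b, ?_⟩
      have : f ⁻¹' Iic b = univ := eq_univ_of_forall fun x => hb ⟨x, rfl⟩
      rw [this, probReal_univ]
      exact measureReal_le_one
    refine ⟨Nat.find hex, ?_, Nat.find_spec hex⟩
    rcases hk : Nat.find hex with _ | k
    · simp
    · have h1 := Nat.find_min hex (m := k) (by omega)
      have h2 : Iio (k + 1) = Iic k := by ext; simp
      rw [h2]
      exact (not_le.mp h1).le
  have hsplit : f ⁻¹' Iic i \ f ⁻¹' Iio i = f ⁻¹' {i} := by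
    ext x
    simp only [mem_sdiff, mem_preimage, mem_Iic, mem_Iio, mem_singleton_iff]
    omega
  have hsub : f ⁻¹' Iio i ⊆ f ⁻¹' Iic i := preimage_mono Iio_subset_Iic_self
  obtain ⟨D, hD, hDi, hDm⟩ := h.exists_subset (hcl {i})
    (h.valueGroup.sub_mem (h.real_mem hW) (h.real_mem (hcl (Iio i)))) (by linarith) (by
      rw [← hsplit, real_sdiff (hcl _) hsub]
      linarith)
  have hDi' : ∀ x ∈ D, f x = i := fun x hx => hDi hx
  refine ⟨fun x => 2 * (2 * f x + if x ∈ D then 0 else 1) + if x ∈ W then 0 else 1,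
    ?_, fun x y hxy => ?_, fun x y hxy => ?_, f ⁻¹' Iio i ∪ D, (hcl _).union hD, ?_, ?_⟩
  · have h1 := continuous_ite_clopen (Y := ℕ) hD (f := fun _ => 0) (g := fun _ => 1)
      continuous_const continuous_const
    have h2 := continuous_ite_clopen (Y := ℕ) hW (f := fun _ => 0) (g := fun _ => 1)
      continuous_const continuous_const
    exact (continuous_const.mul ((continuous_const.mul hf).add h1)).add h2
  · dsimp only
    split_ifs <;> omega
  · dsimp only at hxy
    by_cases hx : x ∈ W <;> by_cases hy : y ∈ W <;> simp only [hx, hy, if_true, if_false] at hxy ⊢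
    all_goals omega
  · intro x hx y hxy
    dsimp only at hxy
    simp only [mem_union, mem_preimage, mem_Iio] at hx ⊢
    by_contra hcon
    push Not at hcon
    obtain ⟨hy1, hy2⟩ := hcon
    simp only [hy2, if_false] at hxy
    rcases hx with hx | hx
    · split_ifs at hxy <;> omega
    · have := hDi' x hx
      simp only [hx, if_true] at hxy
      split_ifs at hxy <;> omega
  · rw [measureReal_union _ hD.isOpen.measurableSet, hDm]
    · ring
    · refine disjoint_left.mpr fun x hx hx' => ?_
      have := hDi' x hx'
      simp only [mem_preimage, mem_Iio] at hx
      omega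

/-- A scale for `μ`: an increasing family of clopen sets `C t` of measure `t`, for `t ∈ [0, 1]` in
the value group, that separates the points of `X`. The values of `C` elsewhere are irrelevant. -/
structure GoodMeasure.IsScale (h : GoodMeasure μ) (C : ℝ → Set X) : Prop where
  clopen : ∀ t ∈ h.valueGroup, 0 ≤ t → t ≤ 1 → IsClopen (C t)
  meas : ∀ t ∈ h.valueGroup, 0 ≤ t → t ≤ 1 → μ.real (C t) = t
  mono : ∀ s ∈ h.valueGroup, ∀ t ∈ h.valueGroup, 0 ≤ s → s ≤ t → t ≤ 1 → C s ⊆ C t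
  sep : ∀ x y, (∀ t ∈ h.valueGroup, 0 ≤ t → t ≤ 1 → (x ∈ C t ↔ y ∈ C t)) → x = y

/-- Refining labellings successively along an enumeration of the clopen sets, all initial segments of
labels form a chain, which meets every clopen value and separates points. -/
theorem GoodMeasure.exists_scale [CompactSpace X] [T2Space X] [SecondCountableTopology X]
    [TotallyDisconnectedSpace X] (h : GoodMeasure μ) : ∃ C : ℝ → Set X, h.IsScale C := by
  have : Countable (Clopens X) := Clopens.countable_iff_secondCountable.mpr inferInstance
  obtain ⟨W, hW⟩ := exists_surjective_nat (Clopens X)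
  let S := {f : X → ℕ // Continuous f}
  choose ref hcont hlt hsep D hD hDlow hDm using fun (f : S) (k : ℕ) =>
    h.refine_label f.2 (W k).isClopen
  let f : ℕ → S := fun k => Nat.rec ⟨fun _ => 0, continuous_const⟩
    (fun k f => ⟨ref f k, hcont f k⟩) k
  have hf : ∀ k, (f (k + 1)).1 = ref (f k) k := fun k => rfl
  -- `A` is an initial segment for the labelling `f k`.
  let Low : ℕ → Set X → Prop := fun k A => ∀ x ∈ A, ∀ y, (f k).1 y ≤ (f k).1 x → y ∈ A
  have hLow_succ : ∀ k A, Low k A → Low (k + 1) A := fun k A hA x hx y hxy => by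
    refine hA x hx y (not_lt.mp fun hlt' => ?_)
    have := hlt (f k) k x y hlt'
    rw [hf] at hxy
    omega
  have hLow_mono : ∀ k l A, k ≤ l → Low k A → Low l A := fun k l A hkl hA => by
    induction l, hkl using Nat.le_induction with
    | base => exact hA
    | succ l _ ih => exact hLow_succ l A ih
  have hchain : ∀ k l A B, IsClopen A → IsClopen B → Low k A → Low l B → μ.real A ≤ μ.real B →
      A ⊆ B := by
    intro k l A B hAc hBc hA hB hAB
    replace hA := hLow_mono k (max k l) A (le_max_left _ _) hA
    replace hB := hLow_mono l (max k l) B (le_max_right _ _) hB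
    by_contra hsub
    obtain ⟨x, hxA, hxB⟩ := not_subset.mp hsub
    have hBA : B ⊆ A := fun y hy => by
      refine hA x hxA y (not_lt.mp fun hlt' => hxB ?_)
      exact hB y hy x hlt'.le
    exact hsub (h.eq_of_subset hBc hAc hBA hAB).symm.subset
  have hex : ∀ t : ℝ, ∃ A : Set X, t ∈ h.valueGroup → 0 ≤ t → t ≤ 1 →
      IsClopen A ∧ μ.real A = t ∧ ∃ k, Low k A := by
    intro t
    by_cases ht : t ∈ h.valueGroup ∧ 0 ≤ t ∧ t ≤ 1
    · obtain ⟨B, hB, -, hBt⟩ := h.exists_subset isClopen_univ ht.1 ht.2.1 (by simpa using ht.2.2)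
      obtain ⟨k, hk⟩ := hW ⟨B, hB⟩
      refine ⟨D (f k) k, fun _ _ _ => ⟨hD _ _, ?_, k + 1, hDlow (f k) k⟩⟩
      rw [hDm, hk]
      exact hBt
    · exact ⟨∅, fun h1 h2 h3 => (ht ⟨h1, h2, h3⟩).elim⟩
  choose C hC using hex
  refine ⟨C, fun t ht h0 h1 => (hC t ht h0 h1).1, fun t ht h0 h1 => (hC t ht h0 h1).2.1,
    fun s hs t ht h0 hst h1 => ?_, fun x y hxy => ?_⟩
  · obtain ⟨hs1, hs2, k, hk⟩ := hC s hs h0 (hst.trans h1)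
    obtain ⟨ht1, ht2, l, hl⟩ := hC t ht (h0.trans hst) h1
    exact hchain k l _ _ hs1 ht1 hk hl (by rw [hs2, ht2]; exact hst)
  · -- Every clopen initial segment belongs to the scale.
    have hmem : ∀ k A, IsClopen A → Low k A → (x ∈ A ↔ y ∈ A) := by
      intro k A hA hAl
      have h0 : 0 ≤ μ.real A := measureReal_nonneg
      have h1 : μ.real A ≤ 1 := measureReal_le_one
      obtain ⟨c1, c2, l, hl⟩ := hC _ (h.real_mem hA) h0 h1
      have : A = C (μ.real A) := (hchain k l _ _ hA c1 hAl hl c2.ge).antisymm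
        (hchain l k _ _ c1 hA hl hAl c2.le)
      rw [this]
      exact hxy _ (h.real_mem hA) h0 h1
    have hle : ∀ k (z : X), (x ∈ {w | (f k).1 w ≤ (f k).1 z} ↔ y ∈ {w | (f k).1 w ≤ (f k).1 z}) :=
      fun k z => hmem k _ ((isClopen_discrete (Iic ((f k).1 z))).preimage (f k).2)
        fun a ha b hab => le_trans hab ha
    by_contra hne
    obtain ⟨U, hU, hxU, hyU⟩ := exists_isClopen_of_totally_separated hne
    obtain ⟨k, hk⟩ := hW ⟨U, hU⟩
    have heq : (f (k + 1)).1 x = (f (k + 1)).1 y :=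
      le_antisymm ((hle (k + 1) y).mpr (le_refl ((f (k + 1)).1 y)))
        ((hle (k + 1) x).mp (le_refl ((f (k + 1)).1 x)))
    have := hsep (f k) k x y heq
    rw [hk] at this
    exact hyU (this.mp hxU)

/-! ### Cuts: the model of `X` attached to a scale -/

/-- Integer-valued cuts of a subgroup `G ∋ 1` of `ℝ`: monotone functions `F : G → ℤ` that commute
with translation by `1` and vanish at `0`. -/
abbrev Cut (G : AddSubgroup ℝ) (u : G) : Type :=
  {F : G → ℤ // Monotone F ∧ F 0 = 0 ∧ ∀ t, F (t + u) = F t + 1}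

/-- Rotation of cuts by `a`: translate by `a` and renormalize to vanish at `0`. -/
def Cut.rotate {G : AddSubgroup ℝ} {u : G} (a : G) (F : Cut G u) : Cut G u :=
  ⟨fun t => F.1 (t - a) - F.1 (-a), fun s t hst => by
      have := F.2.1 (sub_le_sub_right hst a)
      dsimp only
      omega, by simp, fun t => by
      have := F.2.2.2 (t - a)
      rw [show t - a + u = t + u - a by abel] at this
      change F.1 (t + u - a) - F.1 (-a) = F.1 (t - a) - F.1 (-a) + 1
      rw [this]
      ring⟩

lemma Cut.continuous_rotate {G : AddSubgroup ℝ} {u : G} (a : G) :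
    Continuous (Cut.rotate (u := u) a) := by
  refine Continuous.subtype_mk (continuous_pi fun t => ?_) _
  exact ((continuous_apply _).comp continuous_subtype_val).sub
    ((continuous_apply _).comp continuous_subtype_val)

lemma Cut.rotate_neg {G : AddSubgroup ℝ} {u : G} (a : G) (F : Cut G u) :
    Cut.rotate (-a) (Cut.rotate a F) = F := by
  refine Subtype.ext (funext fun t => ?_)
  simp [Cut.rotate, F.2.2.1]

/-- Rotation by `a` as a homeomorphism of the space of cuts. -/
def Cut.rotateHomeo {G : AddSubgroup ℝ} (u a : G) : Cut G u ≃ₜ Cut G u where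
  toFun := Cut.rotate a
  invFun := Cut.rotate (-a)
  left_inv := Cut.rotate_neg a
  right_inv F := by simpa using Cut.rotate_neg (-a) F
  continuous_toFun := Cut.continuous_rotate a
  continuous_invFun := Cut.continuous_rotate (-a)

namespace GoodMeasure

variable {h : GoodMeasure μ} {C : ℝ → Set X}

/-- `1` as an element of the value group. -/
def unit (h : GoodMeasure μ) : h.valueGroup := ⟨1, h.one_mem⟩

lemma fract_mem (h : GoodMeasure μ) {t : ℝ} (ht : t ∈ h.valueGroup) :
    Int.fract t ∈ h.valueGroup := by
  have := h.valueGroup.sub_mem ht (h.valueGroup.zsmul_mem h.one_mem ⌊t⌋)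
  rw [zsmul_eq_mul, mul_one, Int.self_sub_floor] at this
  exact this

lemma IsScale.zero (hC : h.IsScale C) : C 0 = ∅ := by
  have h1 := hC.meas 0 h.valueGroup.zero_mem le_rfl zero_le_one
  have h2 := hC.clopen 0 h.valueGroup.zero_mem le_rfl zero_le_one
  by_contra hne
  have := h.pos _ h2 (nonempty_iff_ne_empty.mpr hne)
  linarith

lemma IsScale.one (hC : h.IsScale C) : C 1 = univ := by
  have h1 := hC.meas 1 h.one_mem zero_le_one le_rfl
  have h2 := hC.clopen 1 h.one_mem zero_le_one le_rfl
  exact h.eq_of_subset h2 isClopen_univ (subset_univ _) (by simp [h1])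

open scoped Classical in
/-- The value at `t` of the cut attached to a point `x`: it jumps from `0` to `1` where `C t` starts
to contain `x`, and is extended from `[0, 1)` so as to commute with translation by `1`. -/
noncomputable def cutVal (C : ℝ → Set X) (x : X) (t : ℝ) : ℤ :=
  ⌊t⌋ + if x ∈ C (Int.fract t) then 1 else 0

open scoped Classical in
lemma IsScale.cutVal_of_mem (hC : h.IsScale C) (x : X) {t : ℝ} (h0 : 0 ≤ t) (h1 : t ≤ 1) :
    cutVal C x t = if x ∈ C t then 1 else 0 := by
  rcases eq_or_lt_of_le h1 with rfl | h1
  · simp [cutVal, hC.zero, hC.one]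
  · rw [cutVal, Int.fract_eq_self.mpr ⟨h0, h1⟩, Int.floor_eq_zero_iff.mpr ⟨h0, h1⟩, zero_add]

lemma IsScale.cutVal_mono (hC : h.IsScale C) (x : X) {s t : ℝ} (hs : s ∈ h.valueGroup)
    (ht : t ∈ h.valueGroup) (hst : s ≤ t) : cutVal C x s ≤ cutVal C x t := by
  classical
  unfold cutVal
  rcases eq_or_lt_of_le (Int.floor_mono hst) with heq | hlt
  · have hfr : Int.fract s ≤ Int.fract t := by
      rw [Int.fract, Int.fract, heq]
      linarith
    have := hC.mono _ (h.fract_mem hs) _ (h.fract_mem ht) (Int.fract_nonneg s) hfr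
      (Int.fract_lt_one t).le
    split_ifs with h1 h2
    · omega
    · exact (h2 (this h1)).elim
    · omega
    · omega
  · split_ifs <;> omega

lemma cutVal_add_one (x : X) (t : ℝ) : cutVal C x (t + 1) = cutVal C x t + 1 := by
  unfold cutVal
  rw [Int.fract_add_one, Int.floor_add_one]
  ring

/-- The cut attached to a point. -/
noncomputable def IsScale.toCut (hC : h.IsScale C) (x : X) : Cut h.valueGroup h.unit :=
  ⟨fun t => cutVal C x t, fun s t hst => hC.cutVal_mono x s.2 t.2 hst,
    by simp [cutVal, hC.zero], fun t => cutVal_add_one x t⟩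

lemma IsScale.continuous_toCut (hC : h.IsScale C) : Continuous hC.toCut := by
  classical
  refine Continuous.subtype_mk (continuous_pi fun t => ?_) _
  refine continuous_const.add (continuous_ite_clopen ?_ continuous_const continuous_const)
  exact hC.clopen _ (h.fract_mem t.2) (Int.fract_nonneg _) (Int.fract_lt_one _).le

lemma IsScale.toCut_injective (hC : h.IsScale C) : Function.Injective hC.toCut := by
  classical
  intro x y hxy
  refine hC.sep x y fun t ht h0 h1 => ?_
  have h2 : cutVal C x t = cutVal C y t := congrFun (congrArg Subtype.val hxy) ⟨t, ht⟩
  rw [hC.cutVal_of_mem x h0 h1, hC.cutVal_of_mem y h0 h1] at h2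
  by_cases hx : x ∈ C t <;> by_cases hy : y ∈ C t <;> simp [hx, hy] at h2 ⊢

/-- Every cut comes from a point, by compactness: a cut prescribes the sets `C t` that contain the
point, and the corresponding differences `C t \ C s` are nonempty and directed. -/
lemma IsScale.toCut_surjective [CompactSpace X] (hC : h.IsScale C) :
    Function.Surjective hC.toCut := by
  classical
  intro F
  let S := {s : h.valueGroup // 0 ≤ s ∧ s ≤ h.unit ∧ F.1 s ≤ 0}
  let T := {t : h.valueGroup // 0 ≤ t ∧ t ≤ h.unit ∧ 1 ≤ F.1 t}
  have hu0 : (0 : h.valueGroup) ≤ h.unit := zero_le_one (α := ℝ)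
  have hF1 : F.1 h.unit = 1 := by simpa [F.2.2.1] using F.2.2.2 0
  let s0 : S := ⟨0, le_rfl, hu0, F.2.2.1.le⟩
  let t0 : T := ⟨h.unit, hu0, le_rfl, hF1.ge⟩
  have hclS : ∀ s : S, IsClopen (C (s.1 : ℝ)) := fun s => hC.clopen _ s.1.2 s.2.1 s.2.2.1
  have hclT : ∀ t : T, IsClopen (C (t.1 : ℝ)) := fun t => hC.clopen _ t.1.2 t.2.1 t.2.2.1
  have hST : ∀ (s : S) (t : T), (s.1 : ℝ) < t.1 := fun s t => by
    by_contra hle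
    have := F.2.1 (show t.1 ≤ s.1 from not_lt.mp hle)
    have := s.2.2.2
    have := t.2.2.2
    omega
  have : Nonempty (S × T) := ⟨(s0, t0)⟩
  have hcl : ∀ p : S × T, IsClosed (C (p.2.1 : ℝ) \ C (p.1.1 : ℝ)) := fun p =>
    ((hclT p.2).diff (hclS p.1)).isClosed
  obtain ⟨x, hx⟩ := IsCompact.nonempty_iInter_of_directed_nonempty_isCompact_isClosed
    (fun p : S × T => C (p.2.1 : ℝ) \ C (p.1.1 : ℝ)) (by
      rintro ⟨s, t⟩ ⟨s', t'⟩
      have hs : ∃ r : S, C (s.1 : ℝ) ⊆ C (r.1 : ℝ) ∧ C (s'.1 : ℝ) ⊆ C (r.1 : ℝ) := by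
        rcases le_total (s.1 : ℝ) s'.1 with hss | hss
        · exact ⟨s', hC.mono _ s.1.2 _ s'.1.2 s.2.1 hss s'.2.2.1, subset_rfl⟩
        · exact ⟨s, subset_rfl, hC.mono _ s'.1.2 _ s.1.2 s'.2.1 hss s.2.2.1⟩
      have ht : ∃ r : T, C (r.1 : ℝ) ⊆ C (t.1 : ℝ) ∧ C (r.1 : ℝ) ⊆ C (t'.1 : ℝ) := by
        rcases le_total (t.1 : ℝ) t'.1 with htt | htt
        · exact ⟨t, subset_rfl, hC.mono _ t.1.2 _ t'.1.2 t.2.1 htt t'.2.2.1⟩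
        · exact ⟨t', hC.mono _ t'.1.2 _ t.1.2 t'.2.1 htt t.2.2.1, subset_rfl⟩
      obtain ⟨r, hr1, hr2⟩ := hs
      obtain ⟨q, hq1, hq2⟩ := ht
      exact ⟨(r, q), sdiff_subset_sdiff hq1 hr1, sdiff_subset_sdiff hq2 hr2⟩)
    (fun p => by
      by_contra hemp
      have hsub : C (p.2.1 : ℝ) ⊆ C (p.1.1 : ℝ) := by
        by_contra hns
        exact hemp (sdiff_nonempty.mpr hns)
      have hle := measureReal_mono (μ := μ) hsub
      rw [hC.meas _ p.2.1.2 p.2.2.1 p.2.2.2.1, hC.meas _ p.1.1.2 p.1.2.1 p.1.2.2.1] at hle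
      exact absurd (hST p.1 p.2) (not_lt.mpr hle))
    (fun p => (hcl p).isCompact) hcl
  refine ⟨x, Subtype.ext (funext fun t => ?_)⟩
  have hx' : ∀ (s : S) (t : T), x ∈ C (t.1 : ℝ) ∧ x ∉ C (s.1 : ℝ) := fun s t =>
    mem_iInter.mp hx (s, t)
  -- Agreement on `[0, 1]`, and then everywhere by translation.
  have hagree : ∀ r : h.valueGroup, 0 ≤ r → r ≤ h.unit → cutVal C x r = F.1 r := by
    intro r h0 h1
    have hF0 := F.2.1 h0
    have hF1' := F.2.1 h1
    rw [F.2.2.1] at hF0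
    rw [hF1] at hF1'
    rw [hC.cutVal_of_mem x h0 h1]
    by_cases hr : F.1 r ≤ 0
    · rw [if_neg (hx' ⟨r, h0, h1, hr⟩ t0).2]
      omega
    · rw [if_pos (hx' s0 ⟨r, h0, h1, by omega⟩).1]
      omega
  have htrans : ∀ (n : ℤ) (r : h.valueGroup), F.1 (r + n • h.unit) = F.1 r + n := by
    intro n
    induction n using Int.induction_on with
    | zero => simp
    | succ n ih =>
      intro r
      rw [add_zsmul, one_zsmul, ← add_assoc, F.2.2.2, ih]
      ring
    | pred n ih =>
      intro r
      have := F.2.2.2 (r + (-(n : ℤ) - 1) • h.unit)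
      rw [add_assoc, ← add_one_zsmul, sub_add_cancel, ih] at this
      linarith
  let r : h.valueGroup := ⟨Int.fract (t : ℝ), h.fract_mem t.2⟩
  have hr : t = r + ⌊(t : ℝ)⌋ • h.unit := by
    refine Subtype.ext ?_
    simp [r, unit, Int.fract_add_floor]
  have h1 := hagree r (Int.fract_nonneg (t : ℝ)) (Int.fract_lt_one (t : ℝ)).le
  have h2 : cutVal C x t = cutVal C x r + ⌊(t : ℝ)⌋ := by
    simp only [cutVal, r, Int.fract_fract, Int.floor_fract]
    ring
  change cutVal C x t = F.1 t
  rw [h2, h1, ← htrans, ← hr]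

/-- The space `X` is homeomorphic to the space of cuts. -/
noncomputable def IsScale.homeo [CompactSpace X] (hC : h.IsScale C) :
    X ≃ₜ Cut h.valueGroup h.unit :=
  Continuous.homeoOfEquivCompactToT2
    (f := Equiv.ofBijective hC.toCut ⟨hC.toCut_injective, hC.toCut_surjective⟩) hC.continuous_toCut

/-- The homeomorphism of `X` corresponding to rotation of cuts by `a`. -/
noncomputable def IsScale.rotation [CompactSpace X] (hC : h.IsScale C) (a : h.valueGroup) :
    X ≃ₜ X :=
  (hC.homeo.trans (Cut.rotateHomeo h.unit a)).trans hC.homeo.symm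

lemma IsScale.cutVal_rotation [CompactSpace X] (hC : h.IsScale C) (a : h.valueGroup) (x : X)
    (t : ℝ) (ht : t ∈ h.valueGroup) :
    cutVal C (hC.rotation a x) t = cutVal C x (t - a) - cutVal C x (-a) := by
  have h1 : hC.homeo (hC.rotation a x) = Cut.rotate a (hC.homeo x) :=
    hC.homeo.apply_symm_apply _
  exact congrFun (congrArg Subtype.val h1) ⟨t, ht⟩

end GoodMeasure

/-! ### Irrational clopen values: a rotation of cuts -/

/-- A monotone `φ` on `G` at bounded distance from the identity, with `φ (t + 1) = φ t + 1` and with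
`φ (t + a) - φ t` constant for an irrational `a`, is the identity: boundedness of `φ - id` forces
that constant to be `a`, and `φ` then agrees with the identity on the dense group `ℤ a + ℤ`. -/
lemma eq_self_of_rotation {G : AddSubgroup ℝ} (h1 : (1 : ℝ) ∈ G) {a : ℝ} (ha : a ∈ G)
    (hirr : Irrational a) {φ : ℝ → ℝ} (hmono : ∀ s ∈ G, ∀ t ∈ G, s ≤ t → φ s ≤ φ t)
    (hone : ∀ t ∈ G, φ (t + 1) = φ t + 1) (hbd : ∀ t ∈ G, |φ t - t| ≤ 1)
    (hrot : ∀ t ∈ G, φ t = φ (t - a) - φ (-a)) : ∀ t ∈ G, φ t = t := by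
  have h0 : φ 0 = 0 := by
    have := hrot 0 G.zero_mem
    rw [zero_sub, sub_self] at this
    exact this
  have hadd : ∀ t ∈ G, φ (t + a) = φ t + φ a := fun t ht => by
    have e1 := hrot (t + a) (G.add_mem ht ha)
    have e2 := hrot a ha
    rw [sub_self, h0] at e2
    rw [add_sub_cancel_right] at e1
    linarith
  have hmul : ∀ n : ℕ, φ (n * a) = n * φ a := fun n => by
    induction n with
    | zero => simp [h0]
    | succ n ih =>
      have hn : (n : ℝ) * a ∈ G := by simpa using G.nsmul_mem ha n
      push_cast
      rw [add_mul, one_mul, hadd _ hn, ih]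
      ring
  have hφa : φ a = a := by
    by_contra hne
    have hpos : 0 < |φ a - a| := abs_pos.mpr (sub_ne_zero.mpr hne)
    obtain ⟨n, hn⟩ := exists_nat_gt (1 / |φ a - a|)
    have h2 := hbd (n * a) (by simpa using G.nsmul_mem ha n)
    rw [hmul, ← mul_sub, abs_mul, Nat.abs_cast] at h2
    rw [div_lt_iff₀ hpos] at hn
    linarith
  let H : AddSubgroup ℝ :=
    { carrier := {u | u ∈ G ∧ ∀ t ∈ G, φ (t + u) = φ t + u}
      zero_mem' := ⟨G.zero_mem, by simp⟩
      add_mem' := by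
        rintro u v ⟨hu, hu'⟩ ⟨hv, hv'⟩
        refine ⟨G.add_mem hu hv, fun t ht => ?_⟩
        rw [← add_assoc, hv' _ (G.add_mem ht hu), hu' t ht]
        ring
      neg_mem' := by
        rintro u ⟨hu, hu'⟩
        refine ⟨G.neg_mem hu, fun t ht => ?_⟩
        have := hu' (t + -u) (G.add_mem ht (G.neg_mem hu))
        rw [neg_add_cancel_right] at this
        linarith }
  have hH : AddSubgroup.closure {a, 1} ≤ H := by
    rw [AddSubgroup.closure_le]
    rintro u (rfl | rfl)
    · exact ⟨ha, fun t ht => by rw [hadd t ht, hφa]⟩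
    · exact ⟨h1, fun t ht => hone t ht⟩
  have hdense : Dense (AddSubgroup.closure {a, 1} : Set ℝ) :=
    dense_addSubgroupClosure_pair_iff.mpr (by simpa using hirr)
  have hfix : ∀ d ∈ AddSubgroup.closure {a, 1}, d ∈ G ∧ φ d = d := fun d hd => by
    refine ⟨(hH hd).1, ?_⟩
    have := (hH hd).2 0 G.zero_mem
    simpa [h0] using this
  intro t ht
  rcases lt_trichotomy (φ t) t with hlt | heq | hgt
  · obtain ⟨d, hd, hd1, hd2⟩ := hdense.exists_between hlt
    have := hmono d (hfix d hd).1 t ht hd2.le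
    rw [(hfix d hd).2] at this
    linarith
  · exact heq
  · obtain ⟨d, hd, hd1, hd2⟩ := hdense.exists_between hgt
    have := hmono t ht d (hfix d hd).1 hd1.le
    rw [(hfix d hd).2] at this
    linarith

namespace GoodMeasure

variable {h : GoodMeasure μ} {C : ℝ → Set X}

/-- The differences `C t \ C s` of members of a scale. -/
def intervals (h : GoodMeasure μ) (C : ℝ → Set X) : Set (Set X) :=
  {B | ∃ s ∈ h.valueGroup, ∃ t ∈ h.valueGroup, (0 ≤ s ∧ s ≤ 1) ∧ (0 ≤ t ∧ t ≤ 1) ∧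
    B = C t \ C s}

lemma IsScale.max_min (hC : h.IsScale C) {s t : ℝ} (hs : s ∈ h.valueGroup)
    (ht : t ∈ h.valueGroup) (hs' : 0 ≤ s ∧ s ≤ 1) (ht' : 0 ≤ t ∧ t ≤ 1) :
    C (max s t) = C s ∪ C t ∧ C (min s t) = C s ∩ C t := by
  rcases le_total s t with hst | hst
  · have := hC.mono s hs t ht hs'.1 hst ht'.2
    rw [max_eq_right hst, min_eq_left hst, union_eq_right.mpr this, inter_eq_left.mpr this]
    exact ⟨rfl, rfl⟩
  · have := hC.mono t ht s hs ht'.1 hst hs'.2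
    rw [max_eq_left hst, min_eq_right hst, union_eq_left.mpr this, inter_eq_right.mpr this]
    exact ⟨rfl, rfl⟩

lemma IsScale.inter_mem (hC : h.IsScale C) {A B : Set X} (hA : A ∈ h.intervals C)
    (hB : B ∈ h.intervals C) : A ∩ B ∈ h.intervals C := by
  obtain ⟨s, hs, t, ht, hs', ht', rfl⟩ := hA
  obtain ⟨s₂, hs₂, t₂, ht₂, hs₂', ht₂', rfl⟩ := hB
  refine ⟨max s s₂, ?_, min t t₂, ?_, ⟨le_max_of_le_left hs'.1, max_le hs'.2 hs₂'.2⟩,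
    ⟨le_min ht'.1 ht₂'.1, min_le_of_left_le ht'.2⟩, ?_⟩
  · rcases max_choice s s₂ with e | e <;> rw [e] <;> assumption
  · rcases min_choice t t₂ with e | e <;> rw [e] <;> assumption
  · rw [(hC.max_min hs hs₂ hs' hs₂').1, (hC.max_min ht ht₂ ht' ht₂').2]
    ext x
    simp only [mem_inter_iff, mem_sdiff, mem_union]
    tauto

lemma IsScale.isPiSystem (hC : h.IsScale C) : IsPiSystem (h.intervals C) :=
  fun _ hA _ hB _ => hC.inter_mem hA hB

lemma IsScale.isClopen_of_mem (hC : h.IsScale C) {A : Set X} (hA : A ∈ h.intervals C) :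
    IsClopen A := by
  obtain ⟨s, hs, t, ht, hs', ht', rfl⟩ := hA
  exact (hC.clopen t ht ht'.1 ht'.2).diff (hC.clopen s hs hs'.1 hs'.2)

lemma IsScale.isTopologicalBasis [CompactSpace X] (hC : h.IsScale C) :
    IsTopologicalBasis (h.intervals C) := by
  refine isTopologicalBasis_of_isOpen_of_nhds (fun A hA => (hC.isClopen_of_mem hA).isOpen) ?_
  intro y U hy hU
  have hz := h.valueGroup.zero_mem
  have h1 := h.one_mem
  let ι := {A : Set X // A ∈ h.intervals C ∧ y ∈ A}
  have hne : Nonempty ι := ⟨C 1 \ C 0, ⟨0, hz, 1, h1, ⟨le_rfl, zero_le_one⟩,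
    ⟨zero_le_one, le_rfl⟩, rfl⟩, by simp [hC.zero, hC.one]⟩
  have hdir : Directed (· ⊇ ·) (fun A : ι => A.1) := fun A B =>
    ⟨⟨A.1 ∩ B.1, hC.inter_mem A.2.1 B.2.1, A.2.2, B.2.2⟩, inter_subset_left, inter_subset_right⟩
  obtain ⟨A, hA⟩ := exists_subset_nhds_of_isCompact' hdir
    (fun A => (hC.isClopen_of_mem A.2.1).isClosed.isCompact)
    (fun A => (hC.isClopen_of_mem A.2.1).isClosed) (U := U) (by
      intro x hx
      have hx' : x = y := by
        refine hC.sep x y fun t ht h0 h1' => ?_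
        by_cases hyt : y ∈ C t
        · have := mem_iInter.mp hx ⟨C t \ C 0, ⟨0, hz, t, ht, ⟨le_rfl, zero_le_one⟩,
            ⟨h0, h1'⟩, rfl⟩, by simp [hC.zero, hyt]⟩
          simp [hyt, this.1]
        · have := mem_iInter.mp hx ⟨C 1 \ C t, ⟨t, ht, 1, h1, ⟨h0, h1'⟩,
            ⟨zero_le_one, le_rfl⟩, rfl⟩, by simp [hC.one, hyt]⟩
          simp [hyt, this.2]
      rw [hx']
      exact hU.mem_nhds hy)
  exact ⟨A.1, A.2.1, A.2.2, hA⟩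

/-- A probability measure giving mass `t` to each `C t` is `μ`. -/
lemma IsScale.eq_of_real [CompactSpace X] [SecondCountableTopology X] (hC : h.IsScale C)
    {ν : Measure X} [IsProbabilityMeasure ν]
    (hν : ∀ t ∈ h.valueGroup, 0 ≤ t → t ≤ 1 → ν.real (C t) = t) : ν = μ := by
  refine ext_of_basis hC.isTopologicalBasis hC.isPiSystem ?_
  rintro _ ⟨s, hs, t, ht, hs', ht', rfl⟩
  have hcs := hC.clopen s hs hs'.1 hs'.2
  rcases le_total s t with hst | hst
  · have hsub := hC.mono s hs t ht hs'.1 hst ht'.2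
    rw [real_sdiff hcs hsub, real_sdiff hcs hsub, hν s hs hs'.1 hs'.2, hν t ht ht'.1 ht'.2,
      hC.meas s hs hs'.1 hs'.2, hC.meas t ht ht'.1 ht'.2]
  · rw [sdiff_eq_empty.mpr (hC.mono t ht s hs ht'.1 hst hs'.2)]
    simp

lemma abs_cutVal_sub_le (x : X) (t : ℝ) : |(cutVal C x t : ℝ) - t| ≤ 1 := by
  classical
  have e1 := Int.floor_le t
  have e2 := (Int.lt_floor_add_one t).le
  unfold cutVal
  rw [abs_le]
  split_ifs <;> push_cast <;> constructor <;> linarith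

lemma IsScale.continuous_cutVal (hC : h.IsScale C) {t : ℝ} (ht : t ∈ h.valueGroup) :
    Continuous fun x => (cutVal C x t : ℝ) := by
  classical
  refine continuous_of_discreteTopology.comp (g := fun n : ℤ => (n : ℝ)) ?_
  exact (continuous_apply (⟨t, ht⟩ : h.valueGroup)).comp
    (continuous_subtype_val.comp hC.continuous_toCut)

lemma IsScale.integrable_cutVal (hC : h.IsScale C) {t : ℝ} (ht : t ∈ h.valueGroup)
    (ν : Measure X) [IsProbabilityMeasure ν] : Integrable (fun x => (cutVal C x t : ℝ)) ν := by
  refine Integrable.of_bound (C := 1 + |t|) (hC.continuous_cutVal ht).measurable.aestronglyMeasurable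
    (Filter.Eventually.of_forall fun x => ?_)
  have h1 := abs_cutVal_sub_le (C := C) x t
  have h2 := abs_add_le ((cutVal C x t : ℝ) - t) t
  rw [sub_add_cancel] at h2
  rw [Real.norm_eq_abs]
  linarith

/-- The average cut of a measure `ν`. On `[0, 1]` it is `t ↦ ν (C t)`. -/
noncomputable def mean (C : ℝ → Set X) (ν : Measure X) (t : ℝ) : ℝ :=
  ∫ x, (cutVal C x t : ℝ) ∂ν

lemma IsScale.mean_of_mem (hC : h.IsScale C) (ν : Measure X) {t : ℝ} (ht : t ∈ h.valueGroup)
    (h0 : 0 ≤ t) (h1 : t ≤ 1) : mean C ν t = ν.real (C t) := by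
  classical
  rw [mean, ← integral_indicator_one (hC.clopen t ht h0 h1).isOpen.measurableSet]
  refine integral_congr_ae (Filter.Eventually.of_forall fun x => ?_)
  dsimp only
  rw [hC.cutVal_of_mem x h0 h1, indicator_apply]
  split_ifs <;> simp

lemma IsScale.mean_map_rotation [CompactSpace X] (hC : h.IsScale C) (ν : Measure X)
    [IsProbabilityMeasure ν] (a : h.valueGroup) {t : ℝ} (ht : t ∈ h.valueGroup) :
    mean C (ν.map (hC.rotation a)) t = mean C ν (t - a) - mean C ν (-a) := by
  rw [mean, integral_map (hC.rotation a).continuous.measurable.aemeasurable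
    (hC.continuous_cutVal ht).measurable.aestronglyMeasurable, mean, mean,
    ← integral_sub (hC.integrable_cutVal (h.valueGroup.sub_mem ht a.2) ν)
      (hC.integrable_cutVal (h.valueGroup.neg_mem a.2) ν)]
  refine integral_congr_ae (Filter.Eventually.of_forall fun x => ?_)
  dsimp only
  rw [hC.cutVal_rotation a x t ht]
  push_cast
  rfl

lemma IsScale.mean_add_one (hC : h.IsScale C) (ν : Measure X) [IsProbabilityMeasure ν] {t : ℝ}
    (ht : t ∈ h.valueGroup) : mean C ν (t + 1) = mean C ν t + 1 := by
  simp only [mean, cutVal_add_one, Int.cast_add, Int.cast_one]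
  rw [integral_add (hC.integrable_cutVal ht ν) (integrable_const _)]
  simp

lemma IsScale.mean_mono (hC : h.IsScale C) (ν : Measure X) [IsProbabilityMeasure ν] {s t : ℝ}
    (hs : s ∈ h.valueGroup) (ht : t ∈ h.valueGroup) (hst : s ≤ t) : mean C ν s ≤ mean C ν t :=
  integral_mono (hC.integrable_cutVal hs ν) (hC.integrable_cutVal ht ν) fun x => by
    exact Int.cast_le.mpr (hC.cutVal_mono x hs ht hst)

lemma IsScale.abs_mean_sub_le (hC : h.IsScale C) (ν : Measure X) [IsProbabilityMeasure ν] {t : ℝ}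
    (ht : t ∈ h.valueGroup) : |mean C ν t - t| ≤ 1 := by
  have h1 : mean C ν t - t = ∫ x, ((cutVal C x t : ℝ) - t) ∂ν := by
    rw [integral_sub (hC.integrable_cutVal ht ν) (integrable_const _)]
    simp [mean]
  rw [h1, ← Real.norm_eq_abs]
  refine (norm_integral_le_of_norm_le_const (C := 1)
    (Filter.Eventually.of_forall fun x => abs_cutVal_sub_le x t)).trans ?_
  simp

/-- Unique ergodicity: by `eq_self_of_rotation`, the average cut of an invariant measure is the
identity. -/
lemma IsScale.eq_of_invariant [CompactSpace X] [SecondCountableTopology X] (hC : h.IsScale C)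
    (a : h.valueGroup) (ha : Irrational (a : ℝ)) {ν : Measure X} [IsProbabilityMeasure ν]
    (hν : ν.map (hC.rotation a) = ν) : ν = μ := by
  refine hC.eq_of_real fun t ht h0 h1 => ?_
  rw [← hC.mean_of_mem ν ht h0 h1]
  refine eq_self_of_rotation h.one_mem a.2 ha (fun s hs t ht => hC.mean_mono ν hs ht)
    (fun t ht => hC.mean_add_one ν ht) (fun t ht => hC.abs_mean_sub_le ν ht) (fun t ht => ?_) t ht
  conv_lhs => rw [← hν]
  exact hC.mean_map_rotation ν a ht

lemma cutVal_sub_int (x : X) (t : ℝ) (n : ℤ) : cutVal C x (t - n) = cutVal C x t - n := by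
  unfold cutVal
  rw [Int.fract_sub_intCast, Int.floor_sub_intCast]
  ring

lemma IsScale.mean_self (hC : h.IsScale C) {t : ℝ} (ht : t ∈ h.valueGroup) :
    mean C μ t = t := by
  have h1 : mean C μ (Int.fract t) = Int.fract t := by
    rw [hC.mean_of_mem μ (h.fract_mem ht) (Int.fract_nonneg t) (Int.fract_lt_one t).le,
      hC.meas _ (h.fract_mem ht) (Int.fract_nonneg t) (Int.fract_lt_one t).le]
  have h2 : mean C μ (Int.fract t) = mean C μ t - ⌊t⌋ := by
    simp only [mean, Int.fract, cutVal_sub_int, Int.cast_sub]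
    rw [integral_sub (hC.integrable_cutVal ht μ) (integrable_const _)]
    simp
  rw [h1, Int.fract] at h2
  linarith

lemma IsScale.map_rotation [CompactSpace X] [SecondCountableTopology X] (hC : h.IsScale C)
    (a : h.valueGroup) : μ.map (hC.rotation a) = μ := by
  have : IsProbabilityMeasure (μ.map (hC.rotation a)) :=
    Measure.isProbabilityMeasure_map (hC.rotation a).continuous.measurable.aemeasurable
  refine hC.eq_of_real fun t ht h0 h1 => ?_
  rw [← hC.mean_of_mem _ ht h0 h1, hC.mean_map_rotation μ a ht,
    hC.mean_self (h.valueGroup.sub_mem ht a.2), hC.mean_self (h.valueGroup.neg_mem a.2)]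
  ring

/-- Increments of the cut of `gⁿ x` are those of the cut of `x`, shifted by `n a`. -/
lemma IsScale.cutVal_zpow [CompactSpace X] (hC : h.IsScale C) (a : h.valueGroup) (n : ℤ) :
    ∀ (x : X), ∀ s ∈ h.valueGroup, ∀ t ∈ h.valueGroup,
      cutVal C (((hC.rotation a).toEquiv ^ n) x) t - cutVal C (((hC.rotation a).toEquiv ^ n) x) s =
        cutVal C x (t - n * a) - cutVal C x (s - n * a) := by
  have hmem : ∀ (m : ℤ), ∀ t ∈ h.valueGroup, t - m * a ∈ h.valueGroup := fun m t ht => by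
    simpa using h.valueGroup.sub_mem ht (h.valueGroup.zsmul_mem a.2 m)
  have hstep : ∀ (x : X), ∀ s ∈ h.valueGroup, ∀ t ∈ h.valueGroup,
      cutVal C (hC.rotation a x) t - cutVal C (hC.rotation a x) s =
        cutVal C x (t - a) - cutVal C x (s - a) := fun x s hs t ht => by
    rw [hC.cutVal_rotation a x t ht, hC.cutVal_rotation a x s hs]
    ring
  induction n using Int.induction_on with
  | zero => simp
  | succ n ih =>
    intro x s hs t ht
    have e : ((hC.rotation a).toEquiv ^ ((n : ℤ) + 1)) x =
        ((hC.rotation a).toEquiv ^ (n : ℤ)) (hC.rotation a x) := by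
      rw [zpow_add_one]
      rfl
    rw [e, ih _ s hs t ht, hstep x _ (hmem n s hs) _ (hmem n t ht)]
    push_cast
    rw [sub_sub, sub_sub, add_mul, one_mul]
  | pred n ih =>
    intro x s hs t ht
    have e : ((hC.rotation a).toEquiv ^ (-(n : ℤ) - 1)) x =
        ((hC.rotation a).toEquiv ^ (-(n : ℤ))) ((hC.rotation a).symm x) := by
      rw [zpow_sub_one]
      rfl
    have e2 := hstep ((hC.rotation a).symm x) _ (hmem (-(n : ℤ) - 1) s hs) _
      (hmem (-(n : ℤ) - 1) t ht)
    rw [Homeomorph.apply_symm_apply] at e2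
    rw [e, ih _ s hs t ht, e2]
    push_cast
    congr 2 <;> ring

/-- Minimality: some translate by an element of the dense group `ℤ a + ℤ` moves the jump of the cut
of `x` into a prescribed interval. -/
lemma IsScale.dense_orbit [CompactSpace X] (hC : h.IsScale C) (a : h.valueGroup)
    (ha : Irrational (a : ℝ)) (x : X) :
    Dense (range fun n : ℤ => ((hC.rotation a).toEquiv ^ n) x) := by
  classical
  rw [hC.isTopologicalBasis.dense_iff]
  rintro _ ⟨s, hs, t, ht, hs', ht', rfl⟩ hne
  have hst : s < t := by
    by_contra hle
    rw [sdiff_eq_empty.mpr (hC.mono t ht s hs ht'.1 (not_lt.mp hle) hs'.2)] at hne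
    exact hne.ne_empty rfl
  -- `z` is the position of the jump of the cut of `x` from `0` to `1`.
  let S : Set ℝ := {u | u ∈ h.valueGroup ∧ cutVal C x u ≤ 0}
  have hS0 : (0 : ℝ) ∈ S := ⟨h.valueGroup.zero_mem, by simp [cutVal, hC.zero]⟩
  have hSb : BddAbove S := by
    refine ⟨1, fun u hu => ?_⟩
    have h1 := (abs_le.mp (abs_cutVal_sub_le (C := C) x u)).1
    have h2 : (cutVal C x u : ℝ) ≤ 0 := by exact_mod_cast hu.2
    linarith
  have hdense : Dense (AddSubgroup.closure {(a : ℝ), 1} : Set ℝ) :=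
    dense_addSubgroupClosure_pair_iff.mpr (by simpa using ha)
  obtain ⟨d, hd, hd1, hd2⟩ := hdense.exists_between (sub_lt_sub_right hst (sSup S))
  obtain ⟨n, m, rfl⟩ := AddSubgroup.mem_closure_pair.mp hd
  simp only [zsmul_eq_mul, mul_one] at hd1 hd2
  have hmem : ∀ t ∈ h.valueGroup, t - n * a - m ∈ h.valueGroup := fun t ht => by
    simpa using h.valueGroup.sub_mem (h.valueGroup.sub_mem ht (h.valueGroup.zsmul_mem a.2 n))
      (h.valueGroup.zsmul_mem h.one_mem m)
  have e1 : cutVal C x (s - n * a - m) ≤ 0 := by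
    obtain ⟨u, hu, hu'⟩ := exists_lt_of_lt_csSup ⟨0, hS0⟩
      (show s - n * a - m < sSup S by linarith)
    exact (hC.cutVal_mono x (hmem s hs) hu.1 hu'.le).trans hu.2
  have e2 : 0 < cutVal C x (t - n * a - m) := by
    by_contra hle
    have := le_csSup hSb (show t - n * a - m ∈ S from ⟨hmem t ht, not_lt.mp hle⟩)
    linarith
  rw [cutVal_sub_int] at e1 e2
  have e3 := hC.cutVal_zpow a n x s hs t ht
  refine ⟨((hC.rotation a).toEquiv ^ n) x, ?_, n, rfl⟩
  rw [hC.cutVal_of_mem _ hs'.1 hs'.2, hC.cutVal_of_mem _ ht'.1 ht'.2] at e3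
  split_ifs at e3 with h1 h2
  · omega
  · exact ⟨h1, h2⟩
  · omega
  · omega

/-- If some clopen value is irrational, the corresponding rotation of cuts has the required
properties. -/
theorem rotation_case [CompactSpace X] [T2Space X] [SecondCountableTopology X]
    [TotallyDisconnectedSpace X] (h : GoodMeasure μ) {a : ℝ} (haG : a ∈ h.valueGroup)
    (ha : Irrational a) : HasUniquelyErgodicMinimal μ := by
  obtain ⟨C, hC⟩ := h.exists_scale
  refine ⟨hC.rotation ⟨a, haG⟩, hC.dense_orbit _ ha, hC.map_rotation _, fun ν hν hinv => ?_⟩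
  exact hC.eq_of_invariant _ ha hinv

end GoodMeasure

end AkinProof

theorem akin_uniquely_ergodic
    {X : Type*} [TopologicalSpace X] [CompactSpace X]
    [TopologicalSpace.MetrizableSpace X] [TotallyDisconnectedSpace X] [PerfectSpace X]
    [Nonempty X] [MeasurableSpace X] [BorelSpace X]
    (μ : MeasureTheory.ProbabilityMeasure X)
    (hatom : DynSimplex.Atomless μ) (hsupp : DynSimplex.FullSupport μ)
    (hgood : ∀ A B : Set X, IsClopen A → IsClopen B → μ A < μ B →
      ∃ C : Set X, IsClopen C ∧ C ⊆ B ∧ μ C = μ A) :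
    ∃ g : X ≃ₜ X, DynSimplex.IsMinimal g ∧
      {ν : MeasureTheory.ProbabilityMeasure X | DynSimplex.Preserves g ν} = {μ} := by
  have hreal : ∀ A : Set X, (μ : MeasureTheory.Measure X).real A = (μ A : ℝ) := fun A => rfl
  have h : AkinProof.GoodMeasure (μ : MeasureTheory.Measure X) := by
    refine ⟨fun A hA hne => ?_, fun A B hA hB hlt => ?_⟩
    · rw [hreal]
      exact_mod_cast hsupp A hA.isOpen hne
    · rw [hreal, hreal] at hlt
      obtain ⟨C, hC, hCB, hCA⟩ := hgood A B hA hB (by exact_mod_cast hlt)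
      exact ⟨C, hC, hCB, by rw [hreal, hreal, hCA]⟩
  obtain ⟨g, hmin, hinv, huniq⟩ :
      AkinProof.HasUniquelyErgodicMinimal (μ : MeasureTheory.Measure X) := by
    by_cases hirr : ∃ a ∈ h.valueGroup, Irrational a
    · obtain ⟨a, haG, ha⟩ := hirr
      exact h.rotation_case haG ha
    · exact h.odometer fun t ht hti => hirr ⟨t, ht, hti⟩
  refine ⟨g, hmin, Set.eq_singleton_iff_unique_mem.mpr ⟨hinv, fun ν hν => ?_⟩⟩
  exact Subtype.ext (huniq ν inferInstance hν)
end

section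
/- (Dahl's theorem, strengthened) Let X be a Cantor space and K a nonempty compact convex set of atomless Borel probability measures on X with full support. Assume K is good and has finitely many extreme points. Then there exists a minimal homeomorphism g of X whose set of g-invariant Borel probability measures is exactly K. (In particular, the extreme points need not be assumed mutually singular.) -/
/-!
The homeomorphism is built as a limit of clopen towers, by cutting and stacking, using
goodness, compactness and convexity of `K`, and atomlessness and full support of its members.

*Homogeneity.* By a back-and-forth argument based on goodness, any two clopen sets with equal
measures for all `μ ∈ K` are mapped one to the other by a `K`-preserving homeomorphism
(`exists_homeo_image`); if they are disjoint they are exchanged by a `K`-preserving involution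
supported on their union (`exists_involution`).

*Towers.* A tower is a `K`-preserving homeomorphism of finite order together with a clopen base
meeting each orbit once. Composing with an involution exchanging two parts `C`, `C'` of the base
stacks the columns over `C` on those over `C'` (`Tower.exists_stack`). As `K` is compact and
atomless, `X` has finite clopen covers by uniformly `K`-small sets, and goodness then allows the
following to be achieved by finitely many stackings:
* the base, or the top, is contained in a prescribed nonempty clopen part of the old one
  (`Tower.exists_base_subset`, `Tower.exists_top_subset`);
* given a continuous `f : X → ℤ` with `∫ f dμ < 0` for all `μ ∈ K`, all column sums of `f` are
  nonpositive (`Tower.exists_excess_nonpos`). Indeed the columns with negative sums have measure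
  bounded below, so the columns of maximal positive sum can be stacked on them in small pieces,
  which lowers the maximum and keeps the minimum.

*Limit.* There are countably many such requirements. A sequence of refining towers meeting all of
them converges to a `K`-preserving homeomorphism `g` such that every `f` as above satisfies
`f ≤ φ ∘ g - φ` for some continuous `φ : X → ℤ` (`exists_limit`).

*Conclusion.* Integrating this inequality, a `g`-invariant `ν` has `∫ f dν ≤ 0` for every
continuous `f : X → ℤ` whose integrals over `K` are negative. By the Hahn–Banach theorem in finite
dimension, rounding and compactness, this forces `ν ∈ K` (`mem_of_forall_integral`). Taking
`f = 1 - M • 1_V` with `M` large, an orbit avoiding the clopen set `V` would make the bounded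
function `φ` grow without bound; hence `g` is minimal (`isMinimal_of_dominated`).
-/

open MeasureTheory

namespace DynSimplex

open TopologicalSpace Set

section Construction

set_option linter.unusedSectionVars false

variable {X : Type*} [TopologicalSpace X] [CompactSpace X] [MetrizableSpace X]
  [TotallyDisconnectedSpace X] [MeasurableSpace X] [BorelSpace X]

/-! ### Clopen sets, measures and integrals -/

lemma secondCountable {X : Type*} [TopologicalSpace X] [CompactSpace X] [MetrizableSpace X] :
    SecondCountableTopology X := by
  let := metrizableSpaceMetric X
  infer_instance

lemma countable_clopens {X : Type*} [TopologicalSpace X] [CompactSpace X] [MetrizableSpace X]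
    [TotallyDisconnectedSpace X] : Countable (Clopens X) :=
  Clopens.countable_iff_secondCountable.2 secondCountable

lemma measure_ext_clopen {μ ν : Measure X} [IsProbabilityMeasure μ] [IsProbabilityMeasure ν]
    (h : ∀ E : Set X, IsClopen E → μ E = ν E) : μ = ν := by
  have := secondCountable (X := X)
  refine ext_of_generate_finite {s : Set X | IsClopen s} ?_ ?_ (fun s hs => h s hs) (by simp)
  · rw [BorelSpace.measurable_eq (α := X)]
    exact isTopologicalBasis_isClopen.borel_eq_generateFrom
  · intro s hs t ht _
    exact IsClopen.inter hs ht

lemma probabilityMeasure_ext_clopen {μ ν : ProbabilityMeasure X}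
    (h : ∀ E : Set X, IsClopen E → μ E = ν E) : μ = ν := by
  apply Subtype.ext
  have : IsProbabilityMeasure (μ : Measure X) := μ.2
  have : IsProbabilityMeasure (ν : Measure X) := ν.2
  refine measure_ext_clopen (μ := (μ : Measure X)) (ν := (ν : Measure X)) fun E hE => ?_
  have := h E hE
  rw [← ProbabilityMeasure.ennreal_coeFn_eq_coeFn_toMeasure,
    ← ProbabilityMeasure.ennreal_coeFn_eq_coeFn_toMeasure, this]

lemma coe_eq_real (μ : ProbabilityMeasure X) (E : Set X) :
    ((μ E : NNReal) : ℝ) = (μ : Measure X).real E := rfl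

lemma preserves_of_clopen {g : X ≃ₜ X} {μ : ProbabilityMeasure X}
    (h : ∀ E : Set X, IsClopen E → μ (g ⁻¹' E) = μ E) : Preserves g μ := by
  have : IsProbabilityMeasure ((μ : Measure X).map g) :=
    Measure.isProbabilityMeasure_map g.continuous.measurable.aemeasurable
  refine measure_ext_clopen fun E hE => ?_
  rw [Measure.map_apply g.continuous.measurable hE.isOpen.measurableSet,
    ← ProbabilityMeasure.ennreal_coeFn_eq_coeFn_toMeasure,
    ← ProbabilityMeasure.ennreal_coeFn_eq_coeFn_toMeasure, h E hE]

lemma Preserves.apply_preimage {g : X ≃ₜ X} {μ : ProbabilityMeasure X} (h : Preserves g μ)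
    {E : Set X} (hE : IsClopen E) : μ (g ⁻¹' E) = μ E := by
  have h1 : ((μ : Measure X).map g) E = (μ : Measure X) E := by rw [h]
  rw [Measure.map_apply g.continuous.measurable hE.isOpen.measurableSet,
    ← ProbabilityMeasure.ennreal_coeFn_eq_coeFn_toMeasure,
    ← ProbabilityMeasure.ennreal_coeFn_eq_coeFn_toMeasure] at h1
  exact_mod_cast h1

lemma Preserves.integral_comp {g : X ≃ₜ X} {μ : ProbabilityMeasure X} (h : Preserves g μ)
    {f : X → ℝ} (hf : Continuous f) :
    ∫ x, f (g x) ∂(μ : Measure X) = ∫ x, f x ∂(μ : Measure X) := by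
  have := secondCountable (X := X)
  conv_rhs => rw [← h]
  exact (integral_map g.continuous.measurable.aemeasurable
    hf.measurable.aestronglyMeasurable).symm

lemma integrable_of_continuous (μ : ProbabilityMeasure X) {f : X → ℝ} (hf : Continuous f) :
    Integrable f (μ : Measure X) := by
  have := secondCountable (X := X)
  exact hf.integrable_of_hasCompactSupport (HasCompactSupport.of_compactSpace f)

lemma continuous_intCast {f : X → ℤ} (hf : Continuous f) : Continuous fun x => (f x : ℝ) :=
  Int.isClosedEmbedding_coe_real.continuous.comp hf

lemma continuous_integral {f : X → ℝ} (hf : Continuous f) :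
    Continuous fun μ : ProbabilityMeasure X => ∫ x, f x ∂(μ : Measure X) := by
  rw [continuous_iff_continuousAt]
  intro μ
  exact ProbabilityMeasure.tendsto_iff_forall_integral_tendsto.1 Filter.tendsto_id
    (BoundedContinuousFunction.mkOfCompact ⟨f, hf⟩)

lemma continuous_ite_clopen {Y : Type*} [TopologicalSpace Y] {E : Set X} (hE : IsClopen E)
    [DecidablePred (· ∈ E)]
    {f h : X → Y} (hf : Continuous f) (hh : Continuous h) :
    Continuous fun x => if x ∈ E then f x else h x := by
  refine continuous_if (fun a ha => ?_) hf.continuousOn hh.continuousOn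
  have h0 : frontier {x | x ∈ E} = ∅ := hE.frontier_eq
  rw [h0] at ha
  exact ha.elim

open Classical in
lemma integral_ite_clopen (μ : ProbabilityMeasure X) {E : Set X} (hE : IsClopen E) :
    ∫ x, (if x ∈ E then (1 : ℝ) else 0) ∂(μ : Measure X) = (μ E : ℝ) := by
  rw [coe_eq_real, ← integral_indicator_one hE.isOpen.measurableSet]
  rfl

lemma continuous_apply_clopen {E : Set X} (hE : IsClopen E) :
    Continuous fun μ : ProbabilityMeasure X => (μ E : ℝ) := by
  classical
  simp_rw [← integral_ite_clopen _ hE]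
  exact continuous_integral (continuous_ite_clopen hE continuous_const continuous_const)

lemma apply_union_of_disjoint (μ : ProbabilityMeasure X) {A B : Set X} (hB : IsClopen B)
    (h : Disjoint A B) : μ (A ∪ B) = μ A + μ B := by
  apply NNReal.coe_injective
  push_cast
  exact measureReal_union h hB.isOpen.measurableSet

lemma apply_inter_add_diff (μ : ProbabilityMeasure X) (A : Set X) {B : Set X} (hB : IsClopen B) :
    μ (A ∩ B) + μ (A \ B) = μ A := by
  apply NNReal.coe_injective
  push_cast
  exact measureReal_inter_add_sdiff hB.isOpen.measurableSet

/-! ### Uniform estimates over a compact set of measures -/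

/-- By compactness of `K` and of `X`, an atomless `K` admits finite clopen covers by sets which
are uniformly `K`-small. -/
lemma exists_small_cover {K : Set (ProbabilityMeasure X)} (hcomp : IsCompact K)
    (hat : ∀ μ ∈ K, Atomless μ) {δ : ℝ} (hδ : 0 < δ) :
    ∃ l : List (Set X), (∀ E ∈ l, IsClopen E ∧ ∀ μ ∈ K, (μ E : ℝ) < δ) ∧ ∀ x, ∃ E ∈ l, x ∈ E := by
  have key : ∀ x : X, ∃ E : Set X, IsClopen E ∧ x ∈ E ∧ ∀ μ ∈ K, (μ E : ℝ) < δ := by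
    intro x
    have h1 : ∀ μ ∈ K, ∃ E : Set X, IsClopen E ∧ x ∈ E ∧ (μ E : ℝ) < δ := by
      intro μ hμ
      have h0 : (μ : Measure X) {x} < ENNReal.ofReal δ := by
        rw [← ProbabilityMeasure.ennreal_coeFn_eq_coeFn_toMeasure, hat μ hμ x]
        simpa using hδ
      let := metrizableSpaceMetric X
      obtain ⟨U, hxU, hU, hlt⟩ := Set.exists_isOpen_lt_of_lt {x} _ h0
      obtain ⟨V, hV, hxV, hVU⟩ := compact_exists_isClopen_in_isOpen hU (hxU rfl)
      refine ⟨V, hV, hxV, ?_⟩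
      rw [coe_eq_real, Measure.real, ← ENNReal.lt_ofReal_iff_toReal_lt (measure_ne_top _ _)]
      exact (measure_mono hVU).trans_lt hlt
    choose! E hE hxE hlt using h1
    obtain ⟨s, hsK, hs⟩ := hcomp.elim_nhds_subcover
      (fun μ => {ν : ProbabilityMeasure X | (ν (E μ) : ℝ) < δ})
      (fun μ hμ => (isOpen_lt (continuous_apply_clopen (hE μ hμ)) continuous_const).mem_nhds
        (hlt μ hμ))
    refine ⟨⋂ μ ∈ s, E μ, ?_, ?_, ?_⟩
    · exact isClopen_biInter_finset fun μ hμ => hE μ (hsK μ hμ)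
    · exact mem_iInter₂.2 fun μ hμ => hxE μ (hsK μ hμ)
    · intro ν hν
      obtain ⟨μ, hμ, hνμ⟩ := mem_iUnion₂.1 (hs hν)
      refine lt_of_le_of_lt ?_ hνμ
      exact_mod_cast ProbabilityMeasure.apply_mono ν (biInter_subset_of_mem hμ)
  choose E hE hxE hlt using key
  obtain ⟨s, hs⟩ := isCompact_univ.elim_nhds_subcover E
    (fun x _ => (hE x).isOpen.mem_nhds (hxE x))
  refine ⟨s.toList.map E, ?_, ?_⟩
  · intro F hF
    obtain ⟨x, -, rfl⟩ := List.mem_map.1 hF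
    exact ⟨hE x, hlt x⟩
  · intro x
    obtain ⟨y, hy, hxy⟩ := mem_iUnion₂.1 (hs.2 (mem_univ x))
    exact ⟨E y, List.mem_map.2 ⟨y, Finset.mem_toList.2 hy, rfl⟩, hxy⟩

/-- A positive continuous function on a compact `K` has a positive lower bound. -/
lemma exists_pos_lower_bound {K : Set (ProbabilityMeasure X)} (hcomp : IsCompact K)
    {F : ProbabilityMeasure X → ℝ} (hF : Continuous F) (hpos : ∀ μ ∈ K, 0 < F μ) :
    ∃ c : ℝ, 0 < c ∧ ∀ μ ∈ K, c ≤ F μ := by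
  rcases K.eq_empty_or_nonempty with rfl | hne
  · exact ⟨1, one_pos, by simp⟩
  · obtain ⟨μ, hμ, hmin⟩ := hcomp.exists_isMinOn hne hF.continuousOn
    exact ⟨F μ, hpos μ hμ, fun ν hν => hmin hν⟩

/-- A finite clopen cover of `X` by sets uniformly smaller than a given nonempty clopen set. -/
lemma exists_cover_lt {K : Set (ProbabilityMeasure X)} (hcomp : IsCompact K)
    (hmeas : ∀ μ ∈ K, Atomless μ ∧ FullSupport μ) {O : Set X} (hO : IsClopen O)
    (hne : O.Nonempty) :
    ∃ l : List (Set X), (∀ E ∈ l, IsClopen E ∧ ∀ μ ∈ K, μ E < μ O) ∧ ∀ x, ∃ E ∈ l, x ∈ E := by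
  obtain ⟨c, hc, hcO⟩ := exists_pos_lower_bound hcomp (continuous_apply_clopen hO)
    (fun μ hμ => by exact_mod_cast (hmeas μ hμ).2 O hO.isOpen hne)
  obtain ⟨l, hl, hcov⟩ := exists_small_cover hcomp (fun μ hμ => (hmeas μ hμ).1) hc
  refine ⟨l, fun E hE => ⟨(hl E hE).1, fun μ hμ => ?_⟩, hcov⟩
  have := ((hl E hE).2 μ hμ).trans_le (hcO μ hμ)
  exact_mod_cast this

/-! ### Homeomorphisms as limits of finite approximations -/

/-- A decreasing sequence of relations on `X` with closed nonempty sections, which match clopen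
sets of the source with clopen sets of the target, shrinks to the graph of a homeomorphism. It
preserves `K` as soon as matched clopen sets have the same measures. -/
lemma exists_homeo_of_relations {K : Set (ProbabilityMeasure X)} (R : ℕ → X → X → Prop)
    (hanti : ∀ n x y, R (n + 1) x y → R n x y)
    (hcl : ∀ n x, IsClosed {y | R n x y}) (hne : ∀ n x, ∃ y, R n x y)
    (hcl' : ∀ n y, IsClosed {x | R n x y}) (hne' : ∀ n y, ∃ x, R n x y)
    (hfwd : ∀ E : Set X, IsClopen E → ∃ n, ∃ F : Set X, IsClopen F ∧ (∀ μ ∈ K, μ F = μ E) ∧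
      ∀ x y, R n x y → (x ∈ F ↔ y ∈ E))
    (hbwd : ∀ F : Set X, IsClopen F → ∃ n, ∃ E : Set X, ∀ x y, R n x y → (x ∈ F ↔ y ∈ E)) :
    ∃ θ : X ≃ₜ X, PreservesAll K θ ∧ ∀ n x, R n x (θ x) := by
  have hex : ∀ x, ∃ y, ∀ n, R n x y := fun x => by
    obtain ⟨y, hy⟩ := IsCompact.nonempty_iInter_of_sequence_nonempty_isCompact_isClosed
      (fun n => {y | R n x y}) (fun n y => hanti n x y) (fun n => hne n x)
      (hcl 0 x).isCompact (fun n => hcl n x)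
    exact ⟨y, fun n => mem_iInter.1 hy n⟩
  have hex' : ∀ y, ∃ x, ∀ n, R n x y := fun y => by
    obtain ⟨x, hx⟩ := IsCompact.nonempty_iInter_of_sequence_nonempty_isCompact_isClosed
      (fun n => {x | R n x y}) (fun n x => hanti n x y) (fun n => hne' n y)
      (hcl' 0 y).isCompact (fun n => hcl' n y)
    exact ⟨x, fun n => mem_iInter.1 hx n⟩
  have huniq : ∀ x y y', (∀ n, R n x y) → (∀ n, R n x y') → y = y' := by
    intro x y y' h h'
    by_contra hyy
    obtain ⟨E, hE, hy, hy'⟩ := exists_isClopen_of_totally_separated hyy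
    obtain ⟨n, F, -, -, hF⟩ := hfwd E hE
    exact hy' ((hF x y' (h' n)).1 ((hF x y (h n)).2 hy))
  have huniq' : ∀ x x' y, (∀ n, R n x y) → (∀ n, R n x' y) → x = x' := by
    intro x x' y h h'
    by_contra hxx
    obtain ⟨F, hF, hx, hx'⟩ := exists_isClopen_of_totally_separated hxx
    obtain ⟨n, E, hE⟩ := hbwd F hF
    exact hx' ((hE x' y (h' n)).2 ((hE x y (h n)).1 hx))
  choose θ hθ using hex
  have hbij : Function.Bijective θ := by
    refine ⟨fun x x' hxx => huniq' x x' (θ x) (hθ x) (hxx ▸ hθ x'), fun y => ?_⟩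
    obtain ⟨x, hx⟩ := hex' y
    exact ⟨x, huniq x _ _ (hθ x) hx⟩
  have hpre : ∀ E : Set X, IsClopen E →
      ∃ F : Set X, IsClopen F ∧ (∀ μ ∈ K, μ F = μ E) ∧ θ ⁻¹' E = F := by
    intro E hE
    obtain ⟨n, F, hF, hμ, hFE⟩ := hfwd E hE
    exact ⟨F, hF, hμ, Set.ext fun x => (hFE x (θ x) (hθ x n)).symm⟩
  have hcont : Continuous θ := by
    refine isTopologicalBasis_isClopen.continuous_iff.2 fun E hE => ?_
    obtain ⟨F, hF, -, h⟩ := hpre E hE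
    rw [h]
    exact hF.isOpen
  let e : X ≃ X := Equiv.ofBijective θ hbij
  have he : Continuous e := hcont
  refine ⟨he.homeoOfEquivCompactToT2, fun μ hμ => preserves_of_clopen fun E hE => ?_, ?_⟩
  · obtain ⟨F, -, hF, h⟩ := hpre E hE
    change μ (θ ⁻¹' E) = μ E
    rw [h, hF μ hμ]
  · intro n x
    exact hθ x n

/-! ### Homogeneity: `K`-equivalent clopen sets are exchanged by `K`-preserving maps -/

/-- Goodness in the form used for back-and-forth: inside `K`-equivalent clopen sets one finds the
same measures of clopen subsets. -/
lemma Good.exists_subset {K : Set (ProbabilityMeasure X)} (hgood : Good K)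
    (hmeas : ∀ μ ∈ K, Atomless μ ∧ FullSupport μ) {A A' B' : Set X} (hA : IsClopen A)
    (hA' : IsClopen A') (hB' : IsClopen B') (hsub : A ⊆ A') (heq : ∀ μ ∈ K, μ A' = μ B') :
    ∃ B : Set X, IsClopen B ∧ B ⊆ B' ∧ ∀ μ ∈ K, μ B = μ A := by
  by_cases hAA : A' ⊆ A
  · have : A = A' := hsub.antisymm hAA
    exact ⟨B', hB', subset_rfl, fun μ hμ => by rw [this, heq μ hμ]⟩
  · refine hgood A B' hA hB' fun μ hμ => ?_
    have hpos : 0 < μ (A' \ A) :=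
      (hmeas μ hμ).2 _ (hA'.diff hA).isOpen (nonempty_of_not_subset hAA)
    have h2 := apply_inter_add_diff μ A' hA
    rw [inter_eq_right.2 hsub] at h2
    rw [← heq μ hμ, ← h2]
    exact lt_add_of_pos_right _ hpos

/-- A stage of the back-and-forth construction: two finite clopen partitions of `X`, given as
fibres of continuous labellings, such that pieces with the same label are `K`-equivalent. -/
structure Matching (K : Set (ProbabilityMeasure X)) where
  /-- Labelling of the source. -/
  α : X → ℕ
  /-- Labelling of the target. -/
  β : X → ℕ
  contα : Continuous α
  contβ : Continuous β
  equivK : ∀ μ ∈ K, ∀ i, μ (α ⁻¹' {i}) = μ (β ⁻¹' {i})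

/-- Matchings are ordered by refinement, with matching coarsening maps on labels. -/
instance (K : Set (ProbabilityMeasure X)) : Preorder (Matching K) where
  le s t := ∃ r : ℕ → ℕ, (∀ x, s.α x = r (t.α x)) ∧ ∀ x, s.β x = r (t.β x)
  le_refl s := ⟨id, fun _ => rfl, fun _ => rfl⟩
  le_trans := by
    rintro s t u ⟨r, h1, h2⟩ ⟨r', h1', h2'⟩
    exact ⟨r ∘ r', fun x => by rw [h1, h1']; rfl, fun x => by rw [h2, h2']; rfl⟩

/-- The matching for the reversed problem. -/
def Matching.rev {K : Set (ProbabilityMeasure X)} (s : Matching K) : Matching K where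
  α := s.β
  β := s.α
  contα := s.contβ
  contβ := s.contα
  equivK μ hμ i := (s.equivK μ hμ i).symm

lemma isClopen_fibre {α : X → ℕ} (h : Continuous α) (S : Set ℕ) : IsClopen (α ⁻¹' S) :=
  (isClopen_discrete S).preimage h

/-- The forth step: a matching can be refined so that a prescribed clopen set of the source
becomes a union of pieces. -/
lemma Matching.exists_forth {K : Set (ProbabilityMeasure X)} (hgood : Good K)
    (hmeas : ∀ μ ∈ K, Atomless μ ∧ FullSupport μ) (s : Matching K) {E : Set X}
    (hE : IsClopen E) : ∃ t, s ≤ t ∧ ∃ S : Set ℕ, E = t.α ⁻¹' S := by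
  classical
  have h1 : ∀ i, ∃ F : Set X, IsClopen F ∧ F ⊆ s.β ⁻¹' {i} ∧
      ∀ μ ∈ K, μ F = μ (s.α ⁻¹' {i} ∩ E) := fun i =>
    hgood.exists_subset hmeas ((isClopen_fibre s.contα _).inter hE) (isClopen_fibre s.contα _)
      (isClopen_fibre s.contβ _) inter_subset_left (fun μ hμ => s.equivK μ hμ i)
  choose F hF hFsub hFμ using h1
  have hU : IsClopen (⋃ i, F i) := by
    refine ⟨?_, isOpen_iUnion fun i => (hF i).isOpen⟩
    have : (⋃ i, F i)ᶜ = ⋃ i, (s.β ⁻¹' {i} \ F i) := by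
      ext x
      simp only [mem_compl_iff, mem_iUnion, not_exists, mem_sdiff, mem_preimage, mem_singleton_iff]
      constructor
      · exact fun h => ⟨s.β x, rfl, h _⟩
      · rintro ⟨i, rfl, hx⟩ j hj
        have := hFsub j hj
        simp only [mem_preimage, mem_singleton_iff] at this
        exact hx (this ▸ hj)
    rw [← isOpen_compl_iff, this]
    exact isOpen_iUnion fun i => ((isClopen_fibre s.contβ _).diff (hF i)).isOpen
  have hUi : ∀ i, s.β ⁻¹' {i} ∩ (⋃ j, F j) = F i := by
    intro i
    ext x
    simp only [mem_inter_iff, mem_preimage, mem_singleton_iff, mem_iUnion]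
    constructor
    · rintro ⟨rfl, j, hj⟩
      have := hFsub j hj
      simp only [mem_preimage, mem_singleton_iff] at this
      exact this ▸ hj
    · exact fun h => ⟨hFsub i h, i, h⟩
  have hinter : ∀ μ ∈ K, ∀ i, μ (s.α ⁻¹' {i} ∩ E) = μ (s.β ⁻¹' {i} ∩ ⋃ j, F j) := by
    intro μ hμ i
    rw [hUi, hFμ i μ hμ]
  have hdiff : ∀ μ ∈ K, ∀ i, μ (s.α ⁻¹' {i} \ E) = μ (s.β ⁻¹' {i} \ ⋃ j, F j) := by
    intro μ hμ i
    have h1 := apply_inter_add_diff μ (s.α ⁻¹' {i}) hE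
    rw [s.equivK μ hμ i, ← apply_inter_add_diff μ (s.β ⁻¹' {i}) hU, hinter μ hμ i] at h1
    exact add_left_cancel h1
  -- The new label `2 i + 1` (resp. `2 i`) marks the part of the piece `i` inside (resp. outside).
  have hodd : ∀ (γ : X → ℕ) (G : Set X) (i : ℕ),
      (fun x => 2 * γ x + if x ∈ G then 1 else 0) ⁻¹' {2 * i + 1} = γ ⁻¹' {i} ∩ G := by
    intro γ G i
    ext x
    simp only [mem_preimage, mem_singleton_iff, mem_inter_iff]
    by_cases h : x ∈ G
    · simp [h]
    · simp [h]; omega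
  have heven : ∀ (γ : X → ℕ) (G : Set X) (i : ℕ),
      (fun x => 2 * γ x + if x ∈ G then 1 else 0) ⁻¹' {2 * i} = γ ⁻¹' {i} \ G := by
    intro γ G i
    ext x
    simp only [mem_preimage, mem_singleton_iff, mem_sdiff]
    by_cases h : x ∈ G
    · simp [h]; omega
    · simp [h]
  have hcont : ∀ (γ : X → ℕ) (G : Set X), Continuous γ → IsClopen G →
      Continuous fun x => 2 * γ x + if x ∈ G then 1 else 0 := fun γ G hγ hG =>
    (continuous_const.mul hγ).add (continuous_ite_clopen hG continuous_const continuous_const)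
  refine ⟨⟨fun x => 2 * s.α x + if x ∈ E then 1 else 0,
    fun x => 2 * s.β x + if x ∈ ⋃ j, F j then 1 else 0,
    hcont _ _ s.contα hE, hcont _ _ s.contβ hU, ?_⟩, ⟨fun n => n / 2, ?_, ?_⟩,
    {n | n % 2 = 1}, ?_⟩
  · intro μ hμ i
    rcases Nat.even_or_odd' i with ⟨j, rfl | rfl⟩
    · rw [heven, heven, hdiff μ hμ j]
    · rw [hodd, hodd, hinter μ hμ j]
  · intro x
    dsimp only
    split_ifs <;> omega
  · intro x
    dsimp only
    split_ifs <;> omega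
  · ext x
    simp only [mem_preimage, mem_ofPred_eq]
    split_ifs with h <;> simp [h]

lemma Matching.exists_back {K : Set (ProbabilityMeasure X)} (hgood : Good K)
    (hmeas : ∀ μ ∈ K, Atomless μ ∧ FullSupport μ) (s : Matching K) {E : Set X}
    (hE : IsClopen E) : ∃ t, s ≤ t ∧ ∃ S : Set ℕ, E = t.β ⁻¹' S := by
  obtain ⟨t, ⟨r, h1, h2⟩, S, hS⟩ := s.rev.exists_forth hgood hmeas hE
  exact ⟨t.rev, ⟨r, h2, h1⟩, S, hS⟩

lemma Matching.measure_preimage {K : Set (ProbabilityMeasure X)} (s : Matching K)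
    {μ : ProbabilityMeasure X} (hμ : μ ∈ K) (S : Set ℕ) : μ (s.α ⁻¹' S) = μ (s.β ⁻¹' S) := by
  have h : (μ : Measure X).map s.α = (μ : Measure X).map s.β := by
    refine Measure.ext_of_singleton fun i => ?_
    rw [Measure.map_apply s.contα.measurable (measurableSet_singleton i),
      Measure.map_apply s.contβ.measurable (measurableSet_singleton i),
      ← ProbabilityMeasure.ennreal_coeFn_eq_coeFn_toMeasure,
      ← ProbabilityMeasure.ennreal_coeFn_eq_coeFn_toMeasure, s.equivK μ hμ i]
  have h1 : (μ : Measure X).map s.α S = (μ : Measure X).map s.β S := by rw [h]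
  have hS : MeasurableSet S := MeasurableSet.of_discrete
  rw [Measure.map_apply s.contα.measurable hS, Measure.map_apply s.contβ.measurable hS,
      ← ProbabilityMeasure.ennreal_coeFn_eq_coeFn_toMeasure,
      ← ProbabilityMeasure.ennreal_coeFn_eq_coeFn_toMeasure] at h1
  exact_mod_cast h1

/-- In a matching the same labels occur on both sides, as the measures in `K` have full
support. -/
lemma Matching.exists_label_eq {K : Set (ProbabilityMeasure X)} (hne : K.Nonempty)
    (hmeas : ∀ μ ∈ K, Atomless μ ∧ FullSupport μ) (s : Matching K) (x : X) :
    ∃ y, s.α x = s.β y := by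
  obtain ⟨μ, hμ⟩ := hne
  by_contra! h
  have h0 : s.β ⁻¹' {s.α x} = ∅ := by
    ext y
    simpa using (h y).symm
  have hpos : 0 < μ (s.α ⁻¹' {s.α x}) :=
    (hmeas μ hμ).2 _ (isClopen_fibre s.contα _).isOpen ⟨x, rfl⟩
  rw [s.equivK μ hμ, h0] at hpos
  simp at hpos

/-- Back-and-forth: `K`-equivalent clopen sets are mapped one to the other by a `K`-preserving
homeomorphism. -/
lemma exists_homeo_image {K : Set (ProbabilityMeasure X)} (hne : K.Nonempty) (hgood : Good K)
    (hmeas : ∀ μ ∈ K, Atomless μ ∧ FullSupport μ) {A B : Set X} (hA : IsClopen A)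
    (hB : IsClopen B) (heq : ∀ μ ∈ K, μ A = μ B) :
    ∃ θ : X ≃ₜ X, PreservesAll K θ ∧ ∀ x, x ∈ A ↔ θ x ∈ B := by
  classical
  have := countable_clopens (X := X)
  let := Encodable.ofCountable (Clopens X)
  have hind : ∀ G : Set X, (fun x => if x ∈ G then 1 else 0 : X → ℕ) ⁻¹' {1} = G := by
    intro G
    ext x
    simp
  have hind0 : ∀ G : Set X, (fun x => if x ∈ G then 1 else 0 : X → ℕ) ⁻¹' {0} = Gᶜ := by
    intro G
    ext x
    simp
  have hindn : ∀ (G : Set X) (n : ℕ),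
      (fun x => if x ∈ G then 1 else 0 : X → ℕ) ⁻¹' {n + 2} = ∅ := by
    intro G n
    ext x
    by_cases h : x ∈ G <;> simp [h]
  let s₀ : Matching K :=
    { α := fun x => if x ∈ A then 1 else 0
      β := fun x => if x ∈ B then 1 else 0
      contα := continuous_ite_clopen hA continuous_const continuous_const
      contβ := continuous_ite_clopen hB continuous_const continuous_const
      equivK := by
        intro μ hμ i
        rcases i with _ | _ | n
        · rw [hind0, hind0, compl_eq_univ_sdiff, compl_eq_univ_sdiff]
          have h1 := apply_inter_add_diff μ univ hA
          rw [← apply_inter_add_diff μ univ hB, univ_inter, univ_inter, heq μ hμ] at h1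
          exact add_left_cancel h1
        · rw [zero_add, hind, hind, heq μ hμ]
        · rw [hindn, hindn] }
  let 𝒟 : Clopens X ⊕ Clopens X → Order.Cofinal (Matching K) := fun i =>
    match i with
    | Sum.inl E => ⟨{t | ∃ S : Set ℕ, (E : Set X) = t.α ⁻¹' S}, fun s => by
        obtain ⟨t, h1, h2⟩ := s.exists_forth hgood hmeas E.isClopen
        exact ⟨t, h2, h1⟩⟩
    | Sum.inr E => ⟨{t | ∃ S : Set ℕ, (E : Set X) = t.β ⁻¹' S}, fun s => by
        obtain ⟨t, h1, h2⟩ := s.exists_back hgood hmeas E.isClopen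
        exact ⟨t, h2, h1⟩⟩
  let s : ℕ → Matching K := Order.sequenceOfCofinals s₀ 𝒟
  have hmono : Monotone s := Order.sequenceOfCofinals.monotone s₀ 𝒟
  have hmem : ∀ i, ∃ n, s n ∈ 𝒟 i := fun i =>
    ⟨_, Order.sequenceOfCofinals.encode_mem s₀ 𝒟 i⟩
  obtain ⟨θ, hθ, hR⟩ := exists_homeo_of_relations (K := K)
    (fun n x y => (s n).α x = (s n).β y)
    (fun n x y h => by
      obtain ⟨r, h1, h2⟩ := hmono (Nat.le_succ n)
      rw [h1, h2]
      exact congrArg r h)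
    (fun n x => isClosed_eq continuous_const (s n).contβ)
    (fun n x => (s n).exists_label_eq hne hmeas x)
    (fun n x => isClosed_eq (s n).contα continuous_const)
    (fun n y => by
      obtain ⟨x, hx⟩ := (s n).rev.exists_label_eq hne hmeas y
      exact ⟨x, hx.symm⟩)
    (fun E hE => by
      obtain ⟨n, S, hS⟩ := hmem (Sum.inr ⟨E, hE⟩)
      change E = (s n).β ⁻¹' S at hS
      refine ⟨n, (s n).α ⁻¹' S, isClopen_fibre (s n).contα S, fun μ hμ => ?_, fun x y h => ?_⟩
      · rw [hS, (s n).measure_preimage hμ]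
      · rw [hS, mem_preimage, mem_preimage, h])
    (fun F hF => by
      obtain ⟨n, S, hS⟩ := hmem (Sum.inl ⟨F, hF⟩)
      change F = (s n).α ⁻¹' S at hS
      refine ⟨n, (s n).β ⁻¹' S, fun x y h => ?_⟩
      rw [hS, mem_preimage, mem_preimage, h])
  refine ⟨θ, hθ, fun x => ?_⟩
  have h := hR 0 x
  change (if x ∈ A then 1 else 0 : ℕ) = if θ x ∈ B then 1 else 0 at h
  split_ifs at h with h1 h2 h2 <;> simp_all

/-- Disjoint `K`-equivalent clopen sets are exchanged by a `K`-preserving involution supported on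
their union. -/
lemma exists_involution {K : Set (ProbabilityMeasure X)} (hne : K.Nonempty) (hgood : Good K)
    (hmeas : ∀ μ ∈ K, Atomless μ ∧ FullSupport μ) {C C' : Set X} (hC : IsClopen C)
    (hC' : IsClopen C') (hdisj : Disjoint C C') (heq : ∀ μ ∈ K, μ C = μ C') :
    ∃ k : X ≃ₜ X, PreservesAll K k ∧ (∀ x, k (k x) = x) ∧ (∀ x ∈ C, k x ∈ C') ∧
      (∀ x ∈ C', k x ∈ C) ∧ ∀ x, x ∉ C → x ∉ C' → k x = x := by
  classical
  obtain ⟨θ, hθ, hθC⟩ := exists_homeo_image hne hgood hmeas hC hC' heq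
  have hθC' : ∀ x, x ∈ C' ↔ θ.symm x ∈ C := fun x => by rw [hθC, θ.apply_symm_apply]
  have hd : ∀ x ∈ C', x ∉ C := fun x h' h => Set.disjoint_left.1 hdisj h h'
  let k : X → X := fun x => if x ∈ C then θ x else if x ∈ C' then θ.symm x else x
  have hk : Continuous k :=
    continuous_ite_clopen hC θ.continuous
      (continuous_ite_clopen hC' θ.symm.continuous continuous_id)
  have k1 : ∀ x ∈ C, k x = θ x := fun x hx => if_pos hx
  have k2 : ∀ x ∈ C', k x = θ.symm x := fun x hx => by simp only [k, if_neg (hd x hx), if_pos hx]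
  have k3 : ∀ x, x ∉ C → x ∉ C' → k x = x := fun x h h' => by simp only [k, if_neg h, if_neg h']
  have hkk : ∀ x, k (k x) = x := by
    intro x
    by_cases h : x ∈ C
    · rw [k1 x h, k2 _ ((hθC x).1 h), θ.symm_apply_apply]
    · by_cases h' : x ∈ C'
      · rw [k2 x h', k1 _ ((hθC' x).1 h'), θ.apply_symm_apply]
      · rw [k3 x h h', k3 x h h']
  let e : X ≃ₜ X := ⟨⟨k, k, hkk, hkk⟩, hk, hk⟩
  refine ⟨e, fun μ hμ => preserves_of_clopen fun E hE => ?_, hkk,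
    fun x hx => ?_, fun x hx => ?_, k3⟩
  · -- Cut `X` into `C`, `C'` and the rest; the first two parts of `E` are exchanged.
    have hE' : IsClopen (k ⁻¹' E) := hE.preimage hk
    have hcut : ∀ G : Set X, IsClopen G →
        μ G = μ (G ∩ C) + (μ (G ∩ C') + μ ((G \ C) \ C')) := by
      intro G hG
      rw [← apply_inter_add_diff μ G hC, ← apply_inter_add_diff μ (G \ C) hC']
      congr 3
      ext x
      constructor
      · exact fun h => ⟨h.1.1, h.2⟩
      · exact fun h => ⟨⟨h.1, hd x h.2⟩, h.2⟩
    have e1 : k ⁻¹' E ∩ C = θ ⁻¹' (E ∩ C') := by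
      ext x
      simp only [mem_inter_iff, mem_preimage, ← hθC]
      exact and_congr_left fun h => by rw [k1 x h]
    have e2 : θ ⁻¹' (k ⁻¹' E ∩ C') = E ∩ C := by
      ext x
      simp only [mem_inter_iff, mem_preimage, ← hθC]
      exact and_congr_left fun h => by rw [k2 _ ((hθC x).1 h), θ.symm_apply_apply]
    have e3 : (k ⁻¹' E \ C) \ C' = (E \ C) \ C' := by
      ext x
      simp only [mem_sdiff, mem_preimage]
      constructor
      · rintro ⟨⟨h, h1⟩, h2⟩
        rw [k3 x h1 h2] at h
        exact ⟨⟨h, h1⟩, h2⟩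
      · rintro ⟨⟨h, h1⟩, h2⟩
        refine ⟨⟨?_, h1⟩, h2⟩
        rwa [k3 x h1 h2]
    change μ (k ⁻¹' E) = μ E
    rw [hcut _ hE', hcut _ hE, e1, e3, (hθ μ hμ).apply_preimage (hE.inter hC'), ← e2,
      (hθ μ hμ).apply_preimage (hE'.inter hC')]
    ring
  · change k x ∈ C'
    rw [k1 x hx]
    exact (hθC x).1 hx
  · change k x ∈ C
    rw [k2 x hx]
    exact (hθC' x).1 hx

/-! ### Periodic towers and their sums -/

/-- A clopen tower for `K`, encoded by a `K`-preserving homeomorphism `g` of finite order and a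
clopen base `B`: every `g`-orbit meets `B` in exactly one point. The orbit of `b ∈ B`, listed from
`b` on, is a column; its last point, the one sent back to `b`, lies in the top `g ⁻¹' B`. The
columns enter only through the retraction onto the base and through sums along columns, so that
heights never have to be named. -/
structure Tower (K : Set (ProbabilityMeasure X)) where
  /-- The map climbing the columns, and returning from the top to the base. -/
  g : X ≃ₜ X
  /-- The base. -/
  B : Set X
  hB : IsClopen B
  hg : PreservesAll K g
  retr : ∃ π : X → X, Continuous π ∧ (∀ x, π x ∈ B) ∧ (∀ x ∈ B, π x = x) ∧ ∀ x, π (g x) = π x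
  sums : ∀ f : X → ℤ, Continuous f →
    ∃ φ : X → ℤ, Continuous φ ∧ (∀ x ∈ B, φ x = 0) ∧ ∀ y, g y ∉ B → φ (g y) = φ y + f y

/-- `φ x` is the sum of `f` over the points lying strictly below `x` in its column. -/
structure Tower.IsSum {K : Set (ProbabilityMeasure X)} (t : Tower K) (f φ : X → ℤ) : Prop where
  cont : Continuous φ
  base : ∀ x ∈ t.B, φ x = 0
  step : ∀ y, t.g y ∉ t.B → φ (t.g y) = φ y + f y

/-- At a point of the base this is the sum of `f` over the whole column; it vanishes off the
base. -/
def Tower.excess {K : Set (ProbabilityMeasure X)} (t : Tower K) (f φ : X → ℤ) (b : X) : ℤ :=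
  f (t.g.symm b) + φ (t.g.symm b) - φ b

/-- `t ≤ t'` means that `t'` arises from `t` by cutting and stacking columns: the base shrinks and
the climbing map is only modified on the top. -/
instance (K : Set (ProbabilityMeasure X)) : Preorder (Tower K) where
  le t t' := t'.B ⊆ t.B ∧ ∀ y, t.g y ∉ t.B → t'.g y = t.g y
  le_refl t := ⟨subset_rfl, fun _ _ => rfl⟩
  le_trans := by
    rintro s t u ⟨h1, h2⟩ ⟨h1', h2'⟩
    refine ⟨h1'.trans h1, fun y hy => ?_⟩
    have h := h2 y hy
    rw [← h]
    exact h2' y fun h' => hy (h ▸ h1 h')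

variable {K : Set (ProbabilityMeasure X)}

lemma Tower.B_nonempty [Nonempty X] (t : Tower K) : t.B.Nonempty := by
  obtain ⟨π, -, h, -⟩ := t.retr
  exact ⟨_, h (Classical.arbitrary X)⟩

/-- The tower all of whose columns are single points. -/
def Tower.trivial (K : Set (ProbabilityMeasure X)) : Tower K where
  g := Homeomorph.refl X
  B := univ
  hB := isClopen_univ
  hg := fun _ _ => Measure.map_id
  retr := ⟨id, continuous_id, fun _ => mem_univ _, fun _ _ => rfl, fun _ => rfl⟩
  sums := fun _ _ => ⟨fun _ => 0, continuous_const, fun _ _ => rfl,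
    fun _ h => (h (mem_univ _)).elim⟩

lemma Tower.excess_eq_zero {t : Tower K} {f φ : X → ℤ} (h : t.IsSum f φ) {b : X}
    (hb : b ∉ t.B) : t.excess f φ b = 0 := by
  have := h.step (t.g.symm b) (by rwa [t.g.apply_symm_apply])
  rw [t.g.apply_symm_apply] at this
  rw [excess, this]
  ring

lemma Tower.continuous_excess {t : Tower K} {f φ : X → ℤ} (hf : Continuous f)
    (h : t.IsSum f φ) : Continuous (t.excess f φ) :=
  ((hf.comp t.g.symm.continuous).add (h.cont.comp t.g.symm.continuous)).sub h.cont

/-- The columns exhaust `X`, so the column sums have the same integral as `f`. -/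
lemma Tower.integral_excess {t : Tower K} {f φ : X → ℤ} (hf : Continuous f)
    (h : t.IsSum f φ) {μ : ProbabilityMeasure X} (hμ : μ ∈ K) :
    ∫ x, (t.excess f φ x : ℝ) ∂(μ : Measure X) = ∫ x, (f x : ℝ) ∂(μ : Measure X) := by
  have hf' := continuous_intCast hf
  have hφ' := continuous_intCast h.cont
  rw [← (t.hg μ hμ).integral_comp (continuous_intCast (t.continuous_excess hf h))]
  have : ∀ x, (t.excess f φ (t.g x) : ℝ) = f x + φ x - φ (t.g x) := by
    intro x
    simp [excess]
  have i1 := integrable_of_continuous μ hf'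
  have i2 := integrable_of_continuous μ hφ'
  have i3 : Integrable (fun x => (φ (t.g x) : ℝ)) (μ : Measure X) :=
    integrable_of_continuous μ (hφ'.comp t.g.continuous)
  have i4 := (t.hg μ hμ).integral_comp hφ'
  simp_rw [this]
  rw [integral_sub (f := fun x => (f x : ℝ) + φ x) (i1.add i2) i3, i4, integral_add i1 i2]
  ring

/-- Cutting and stacking: for disjoint `K`-equivalent clopen parts `C`, `C'` of the base, the
columns over `C` are put on top of the columns over `C'`. -/
lemma Tower.exists_stack (hne : K.Nonempty) (hgood : Good K)
    (hmeas : ∀ μ ∈ K, Atomless μ ∧ FullSupport μ) (t : Tower K) {C C' : Set X}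
    (hC : IsClopen C) (hC' : IsClopen C') (hCB : C ⊆ t.B) (hCB' : C' ⊆ t.B)
    (hdisj : Disjoint C C') (heq : ∀ μ ∈ K, μ C = μ C') :
    ∃ t', t ≤ t' ∧ t'.B = t.B \ C ∧ t'.g ⁻¹' t'.B = t.g ⁻¹' (t.B \ C') ∧
      ∀ f φ, t.IsSum f φ → Continuous f → ∃ φ', t'.IsSum f φ' ∧
        (∀ b ∈ C, t'.excess f φ' b = 0) ∧
        (∀ b ∈ C', ∃ c ∈ C, t'.excess f φ' b = t.excess f φ b + t.excess f φ c) ∧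
        ∀ b, b ∉ C → b ∉ C' → t'.excess f φ' b = t.excess f φ b := by
  classical
  obtain ⟨k, hk, hkk, kC, kC', kid⟩ := exists_involution hne hgood hmeas hC hC' hdisj heq
  obtain ⟨π, hπ, hπB, hπid, hπg⟩ := t.retr
  have hd : ∀ x ∈ C', x ∉ C := fun x h' h => Set.disjoint_left.1 hdisj h h'
  have hπC : IsClopen (π ⁻¹' C) := hC.preimage hπ
  have hsymm : ∀ x, k.symm x = k x := fun x => by rw [k.symm_apply_eq, hkk]
  have hπs : ∀ x, π (t.g.symm x) = π x := fun x => by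
    rw [← hπg (t.g.symm x), t.g.apply_symm_apply]
  let g' : X ≃ₜ X := t.g.trans k
  have hg' : ∀ x, g' x = k (t.g x) := fun _ => rfl
  have hgs : ∀ x, g'.symm x = t.g.symm (k x) := fun x => by
    rw [← hsymm]; rfl
  let ψ : (X → ℤ) → (X → ℤ) → X → ℤ := fun f φ x =>
    if x ∈ π ⁻¹' C then φ x + t.excess f φ (k (π x)) else φ x
  have ψ1 : ∀ f φ x, π x ∈ C → ψ f φ x = φ x + t.excess f φ (k (π x)) :=
    fun f φ x hx => if_pos hx
  have ψ2 : ∀ f φ x, π x ∉ C → ψ f φ x = φ x := fun f φ x hx => if_neg hx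
  have hψc : ∀ f φ, Continuous f → t.IsSum f φ → Continuous (ψ f φ) := fun f φ hf h =>
    continuous_ite_clopen hπC
      (h.cont.add ((t.continuous_excess hf h).comp (k.continuous.comp hπ))) h.cont
  have hψB : ∀ f φ, t.IsSum f φ → ∀ x ∈ t.B \ C, ψ f φ x = 0 := by
    rintro f φ h x ⟨hx, hxC⟩
    rw [ψ2 _ _ _ (by rwa [hπid x hx]), h.base x hx]
  have hψs : ∀ f φ, t.IsSum f φ → ∀ y, g' y ∉ t.B \ C → ψ f φ (g' y) = ψ f φ y + f y := by
    intro f φ h y hy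
    rw [hg'] at hy ⊢
    by_cases h1 : t.g y ∈ C
    · exact (hy ⟨hCB' (kC _ h1), hd _ (kC _ h1)⟩).elim
    have hπy : ∀ h2 : t.g y ∈ t.B, π y = t.g y := fun h2 => by rw [← hπg, hπid _ h2]
    by_cases h2 : t.g y ∈ C'
    · have h3 := kC' _ h2
      have h4 := hπy (hCB' h2)
      rw [ψ1 _ _ _ (by rwa [hπid _ (hCB h3)]), hπid _ (hCB h3), hkk, h.base _ (hCB h3),
        ψ2 _ _ y (by rwa [h4]), excess, t.g.symm_apply_apply, h.base _ (hCB' h2)]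
      ring
    · rw [kid _ h1 h2] at hy ⊢
      have h3 : t.g y ∉ t.B := fun h3 => hy ⟨h3, h1⟩
      by_cases h4 : π y ∈ C
      · rw [ψ1 _ _ _ (by rwa [hπg]), ψ1 _ _ _ h4, hπg, h.step _ h3]
        ring
      · rw [ψ2 _ _ _ (by rwa [hπg]), ψ2 _ _ _ h4, h.step _ h3]
  let π' : X → X := fun x => if x ∈ π ⁻¹' C then k (π x) else π x
  have π1 : ∀ x, π x ∈ C → π' x = k (π x) := fun x hx => if_pos hx
  have π2 : ∀ x, π x ∉ C → π' x = π x := fun x hx => if_neg hx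
  let t' : Tower K :=
    { g := g'
      B := t.B \ C
      hB := t.hB.diff hC
      hg := fun μ hμ => preserves_of_clopen fun E hE => by
        change μ (t.g ⁻¹' (k ⁻¹' E)) = μ E
        rw [(t.hg μ hμ).apply_preimage (hE.preimage k.continuous),
          (hk μ hμ).apply_preimage hE]
      retr := by
        refine ⟨π', continuous_ite_clopen hπC (k.continuous.comp hπ) hπ, fun x => ?_,
          fun x hx => ?_, fun x => ?_⟩
        · by_cases h : π x ∈ C
          · rw [π1 x h]
            exact ⟨hCB' (kC _ h), hd _ (kC _ h)⟩
          · rw [π2 x h]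
            exact ⟨hπB x, h⟩
        · rw [π2 x (by rw [hπid x hx.1]; exact hx.2), hπid x hx.1]
        · rw [hg']
          have hπy : ∀ h2 : t.g x ∈ t.B, π x = t.g x := fun h2 => by rw [← hπg, hπid _ h2]
          by_cases h1 : t.g x ∈ C
          · have h3 := hπy (hCB h1)
            have h4 := kC _ h1
            have h5 := hπid _ (hCB' h4)
            rw [π1 x (by rwa [h3]), h3, π2 _ (by rw [h5]; exact hd _ h4), h5]
          · by_cases h2 : t.g x ∈ C'
            · have h3 := hπy (hCB' h2)
              have h4 := kC' _ h2
              have h5 := hπid _ (hCB h4)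
              rw [π2 x (by rwa [h3]), h3, π1 _ (by rwa [h5]), h5, hkk]
            · rw [kid _ h1 h2]
              simp only [π', mem_preimage, hπg]
      sums := fun f hf => by
        obtain ⟨φ, h1, h2, h3⟩ := t.sums f hf
        have h : t.IsSum f φ := ⟨h1, h2, h3⟩
        exact ⟨ψ f φ, hψc f φ hf h, hψB f φ h, hψs f φ h⟩ }
  refine ⟨t', ⟨sdiff_subset, fun y hy => ?_⟩, rfl, ?_, fun f φ h hf => ⟨ψ f φ,
    ⟨hψc f φ hf h, hψB f φ h, hψs f φ h⟩, fun b hb => ?_, fun b hb => ⟨k b, kC' b hb, ?_⟩,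
    fun b hb hb' => ?_⟩⟩
  · exact kid _ (fun h => hy (hCB h)) (fun h => hy (hCB' h))
  · ext y
    change k (t.g y) ∈ t.B \ C ↔ t.g y ∈ t.B \ C'
    by_cases h1 : t.g y ∈ C
    · exact ⟨fun _ => ⟨hCB h1, fun h => hd _ h h1⟩, fun _ => ⟨hCB' (kC _ h1), hd _ (kC _ h1)⟩⟩
    · by_cases h2 : t.g y ∈ C'
      · exact ⟨fun h => (h.2 (kC' _ h2)).elim, fun h => (h.2 h2).elim⟩
      · rw [kid _ h1 h2]
        exact ⟨fun h => ⟨h.1, h2⟩, fun h => ⟨h.1, h1⟩⟩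
  · change f (g'.symm b) + ψ f φ (g'.symm b) - ψ f φ b = 0
    have h1 := kC b hb
    have h2 := hπid _ (hCB' h1)
    have h3 := hπid _ (hCB hb)
    rw [hgs, ψ2 _ _ (t.g.symm (k b)) (by rw [hπs, h2]; exact hd _ h1), ψ1 _ _ b (by rwa [h3]), h3,
      h.base b (hCB hb), excess, h.base _ (hCB' h1)]
    ring
  · change f (g'.symm b) + ψ f φ (g'.symm b) - ψ f φ b = _
    have h1 := kC' b hb
    have h2 := hπid _ (hCB h1)
    have h3 := hπid _ (hCB' hb)
    rw [hgs, ψ1 _ _ (t.g.symm (k b)) (by rwa [hπs, h2]), hπs, h2, hkk,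
      ψ2 _ _ b (by rw [h3]; exact hd _ hb), h.base b (hCB' hb)]
    rw [excess, excess, h.base b (hCB' hb), h.base _ (hCB h1)]
    ring
  · change f (g'.symm b) + ψ f φ (g'.symm b) - ψ f φ b = _
    rw [hgs, kid b hb hb', excess]
    by_cases h4 : π b ∈ C
    · rw [ψ1 _ _ _ (by rwa [hπs]), ψ1 _ _ _ h4, hπs]
      ring
    · rw [ψ2 _ _ _ (by rwa [hπs]), ψ2 _ _ _ h4]

/-! ### Improving towers by cutting and stacking -/

lemma exists_int_bound {f : X → ℤ} (hf : Continuous f) : ∃ D : ℕ, ∀ x, |f x| ≤ D := by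
  obtain ⟨C, hC⟩ := isCompact_univ.exists_bound_of_continuousOn hf.continuousOn
  obtain ⟨D, hD⟩ := exists_nat_ge C
  refine ⟨D, fun x => ?_⟩
  have := (hC x (mem_univ x)).trans hD
  rw [Int.norm_eq_abs] at this
  exact_mod_cast this

/-- One round of `Tower.exists_excess_nonpos`: columns with maximal sum `L ≥ 1` are stacked on
columns with negative sums, one small piece of the cover `l` at a time. The lower bound `-D` on
column sums is kept, so that the columns with negative sums always have measure at least `c / D`
and there is room for the next piece. -/
lemma Tower.exists_lower_max (hne : K.Nonempty) (hgood : Good K)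
    (hmeas : ∀ μ ∈ K, Atomless μ ∧ FullSupport μ) {f : X → ℤ} (hf : Continuous f) {c : ℝ}
    (hc : ∀ μ ∈ K, ∫ x, (f x : ℝ) ∂(μ : Measure X) ≤ -c) (D : ℕ) {L : ℤ} (hL : 1 ≤ L)
    (l : List (Set X)) (hl : ∀ E ∈ l, IsClopen E ∧ ∀ μ ∈ K, (μ E : ℝ) * D < c) :
    ∀ (t : Tower K) (φ : X → ℤ), t.IsSum f φ → (∀ x, t.excess f φ x ≤ L) →
      (∀ x, -(D : ℤ) ≤ t.excess f φ x) → (∀ x, t.excess f φ x = L → ∃ E ∈ l, x ∈ E) →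
      ∃ t', t ≤ t' ∧ ∃ φ', t'.IsSum f φ' ∧ (∀ x, t'.excess f φ' x ≤ L - 1) ∧
        ∀ x, -(D : ℤ) ≤ t'.excess f φ' x := by
  classical
  induction l with
  | nil =>
    intro t φ h h1 h2 h3
    refine ⟨t, le_rfl, φ, h, fun x => ?_, h2⟩
    have h4 : t.excess f φ x ≠ L := fun h4 => by simpa using h3 x h4
    have := h1 x
    omega
  | cons E l ih =>
    intro t φ h h1 h2 h3
    obtain ⟨hE, hEμ⟩ := hl E (by simp)
    have hcont := t.continuous_excess hf h
    let C : Set X := t.excess f φ ⁻¹' {L} ∩ E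
    let N : Set X := t.excess f φ ⁻¹' Iio 0
    have hC : IsClopen C := ((isClopen_discrete _).preimage hcont).inter hE
    have hN : IsClopen N := (isClopen_discrete _).preimage hcont
    have hCe : ∀ x ∈ C, t.excess f φ x = L := fun x hx => hx.1
    have hNe : ∀ x ∈ N, t.excess f φ x < 0 := fun x hx => hx
    have hlt : ∀ μ ∈ K, μ C < μ N := by
      intro μ hμ
      have hN1 : c ≤ (μ N : ℝ) * D := by
        have e1 : Integrable (fun x => -(if x ∈ N then (1 : ℝ) else 0) * D) (μ : Measure X) :=
          integrable_of_continuous μ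
            ((continuous_ite_clopen hN continuous_const continuous_const).neg.mul
              continuous_const)
        have e2 := integral_mono e1
          (integrable_of_continuous μ (continuous_intCast hcont)) (fun x => by
            by_cases hx : x ∈ N
            · simp only [hx, if_true]
              have := h2 x
              have h5 : (-(D : ℝ)) ≤ (t.excess f φ x : ℝ) := by exact_mod_cast this
              linarith
            · simp only [hx, if_false]
              have : 0 ≤ t.excess f φ x := not_lt.1 hx
              have h5 : (0 : ℝ) ≤ (t.excess f φ x : ℝ) := by exact_mod_cast this
              linarith)
        rw [t.integral_excess hf h hμ, integral_mul_const, integral_neg,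
          integral_ite_clopen μ hN] at e2
        have := hc μ hμ
        linarith
      have hC1 : (μ C : ℝ) ≤ μ E := by
        exact_mod_cast ProbabilityMeasure.apply_mono μ inter_subset_right
      have hE1 := hEμ μ hμ
      by_contra hcon
      have hcon' : (μ N : ℝ) ≤ μ C := by exact_mod_cast not_lt.1 hcon
      have : (μ N : ℝ) * D ≤ μ E * D :=
        mul_le_mul_of_nonneg_right (hcon'.trans hC1) (Nat.cast_nonneg D)
      linarith
    obtain ⟨C', hC', hCN, hCC⟩ := hgood C N hC hN hlt
    have hoff : ∀ x, t.excess f φ x ≠ 0 → x ∈ t.B := fun x hx => by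
      by_contra hxB
      exact hx (t.excess_eq_zero h hxB)
    obtain ⟨t', htt', -, -, hsum⟩ := t.exists_stack hne hgood hmeas hC hC'
      (fun x hx => hoff x (by have := hCe x hx; omega))
      (fun x hx => hoff x (by have := hNe x (hCN hx); omega))
      (Set.disjoint_left.2 fun x hx hx' => by
        have := hCe x hx
        have := hNe x (hCN hx')
        omega)
      (fun μ hμ => (hCC μ hμ).symm)
    obtain ⟨φ', h', e1, e2, e3⟩ := hsum f φ h hf
    have hcases : ∀ x, t'.excess f φ' x < L ∧ -(D : ℤ) ≤ t'.excess f φ' x ∨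
        x ∉ C ∧ t'.excess f φ' x = t.excess f φ x := by
      intro x
      by_cases hx : x ∈ C
      · left
        rw [e1 x hx]
        omega
      · by_cases hx' : x ∈ C'
        · left
          obtain ⟨y, hy, h4⟩ := e2 x hx'
          have := hCe y hy
          have := hNe x (hCN hx')
          have := h2 x
          omega
        · exact Or.inr ⟨hx, e3 x hx hx'⟩
    obtain ⟨t'', h4, h5⟩ := ih (fun E' hE' => hl E' (by simp [hE'])) t' φ' h'
      (fun x => by
        have := h1 x
        rcases hcases x with h4 | h4 <;> omega)
      (fun x => by
        have := h2 x
        rcases hcases x with h4 | h4 <;> omega)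
      (fun x hx => by
        rcases hcases x with h4 | ⟨h4, h5⟩
        · omega
        · rw [h5] at hx
          obtain ⟨E', hE', hxE⟩ := h3 x hx
          rcases List.mem_cons.1 hE' with rfl | hE'
          · exact (h4 ⟨hx, hxE⟩).elim
          · exact ⟨E', hE', hxE⟩)
    exact ⟨t'', htt'.trans h4, h5⟩

/-- If `f` has negative integral for every measure in `K`, then a tower can be refined so that the
sum of `f` over each column is nonpositive. -/
lemma Tower.exists_excess_nonpos (hne : K.Nonempty) (hcomp : IsCompact K) (hgood : Good K)
    (hmeas : ∀ μ ∈ K, Atomless μ ∧ FullSupport μ) (t : Tower K) {f : X → ℤ}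
    (hf : Continuous f) (hneg : ∀ μ ∈ K, ∫ x, (f x : ℝ) ∂(μ : Measure X) < 0) :
    ∃ t', t ≤ t' ∧ ∃ φ, t'.IsSum f φ ∧ ∀ x, t'.excess f φ x ≤ 0 := by
  obtain ⟨c, hc, hcK⟩ := exists_pos_lower_bound hcomp
    (continuous_integral (continuous_intCast hf)).neg
    (fun μ hμ => neg_pos.2 (hneg μ hμ))
  obtain ⟨φ, a1, a2, a3⟩ := t.sums f hf
  have h : t.IsSum f φ := ⟨a1, a2, a3⟩
  obtain ⟨D, hD⟩ := exists_int_bound (t.continuous_excess hf h)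
  have hD1 : (0 : ℝ) < D + 1 := by positivity
  obtain ⟨l, hl, hcov⟩ := exists_small_cover hcomp (fun μ hμ => (hmeas μ hμ).1)
    (div_pos hc hD1)
  have hl' : ∀ E ∈ l, IsClopen E ∧ ∀ μ ∈ K, (μ E : ℝ) * D < c := fun E hE =>
    ⟨(hl E hE).1, fun μ hμ => by
      have h1 := (lt_div_iff₀ hD1).1 ((hl E hE).2 μ hμ)
      have h2 : (0 : ℝ) ≤ μ E := NNReal.coe_nonneg _
      linarith⟩
  have key : ∀ (L : ℕ) (t : Tower K) (φ : X → ℤ), t.IsSum f φ → (∀ x, t.excess f φ x ≤ L) →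
      (∀ x, -(D : ℤ) ≤ t.excess f φ x) →
      ∃ t', t ≤ t' ∧ ∃ φ, t'.IsSum f φ ∧ ∀ x, t'.excess f φ x ≤ 0 := by
    intro L
    induction L with
    | zero => exact fun t φ h h1 _ => ⟨t, le_rfl, φ, h, by simpa using h1⟩
    | succ L ih =>
      intro t φ h h1 h2
      obtain ⟨t', htt', φ', h', h1', h2'⟩ := Tower.exists_lower_max hne hgood hmeas hf
        (fun μ hμ => le_neg_of_le_neg (hcK μ hμ)) D (L := (L + 1 : ℕ)) (by omega) l hl' t φ h h1 h2
        (fun x _ => hcov x)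
      obtain ⟨t'', h3, h4⟩ := ih t' φ' h' (fun x => by have := h1' x; omega) h2'
      exact ⟨t'', htt'.trans h3, h4⟩
  exact key D t φ h (fun x => (abs_le.1 (hD x)).2) (fun x => (abs_le.1 (hD x)).1)

/-- A tower can be refined so that its base lies in a given part `O` of the old base: the columns
based outside `O` are stacked, in small pieces, on columns based in `O`. -/
lemma Tower.exists_base_subset (hne : K.Nonempty) (hcomp : IsCompact K) (hgood : Good K)
    (hmeas : ∀ μ ∈ K, Atomless μ ∧ FullSupport μ) (t : Tower K) {O : Set X}
    (hO : IsClopen O) (hOne : O.Nonempty) (hOB : O ⊆ t.B) : ∃ t', t ≤ t' ∧ t'.B ⊆ O := by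
  obtain ⟨l, hl, hcov⟩ := exists_cover_lt hcomp hmeas hO hOne
  have key : ∀ l : List (Set X), (∀ E ∈ l, IsClopen E ∧ ∀ μ ∈ K, μ E < μ O) → ∀ t : Tower K,
      O ⊆ t.B → (∀ x ∈ t.B, x ∉ O → ∃ E ∈ l, x ∈ E) → ∃ t', t ≤ t' ∧ t'.B ⊆ O := by
    intro l
    induction l with
    | nil =>
      intro _ t _ h
      exact ⟨t, le_rfl, fun x hx => by
        by_contra hxO
        simpa using h x hx hxO⟩
    | cons E l ih =>
      intro hl t hOB h
      obtain ⟨hE, hEμ⟩ := hl E (by simp)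
      have hC : IsClopen ((t.B ∩ E) \ O) := (t.hB.inter hE).diff hO
      obtain ⟨C', hC', hCO, hCC⟩ := hgood _ O hC hO fun μ hμ =>
        (ProbabilityMeasure.apply_mono μ (sdiff_subset.trans inter_subset_right)).trans_lt
          (hEμ μ hμ)
      obtain ⟨t', htt', hB, -, -⟩ := t.exists_stack hne hgood hmeas hC hC'
        (sdiff_subset.trans inter_subset_left) (hCO.trans hOB)
        (Set.disjoint_left.2 fun x hx hx' => hx.2 (hCO hx')) (fun μ hμ => (hCC μ hμ).symm)
      obtain ⟨t'', h3, h4⟩ := ih (fun E' hE' => hl E' (by simp [hE'])) t'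
        (by rw [hB]; exact fun x hx => ⟨hOB hx, fun hx' => hx'.2 hx⟩)
        (fun x hx hxO => by
          rw [hB] at hx
          obtain ⟨E', hE', hxE⟩ := h x hx.1 hxO
          rcases List.mem_cons.1 hE' with rfl | hE'
          · exact (hx.2 ⟨⟨hx.1, hxE⟩, hxO⟩).elim
          · exact ⟨E', hE', hxE⟩)
      exact ⟨t'', htt'.trans h3, h4⟩
  exact key l hl t hOB fun x _ _ => hcov x

/-- A tower can be refined so that its top lies in a given part `Q` of the old top: columns ending
in `Q` are stacked, in small pieces, on the columns ending outside `Q`. -/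
lemma Tower.exists_top_subset (hne : K.Nonempty) (hcomp : IsCompact K) (hgood : Good K)
    (hmeas : ∀ μ ∈ K, Atomless μ ∧ FullSupport μ) (t : Tower K) {Q : Set X}
    (hQ : IsClopen Q) (hQne : Q.Nonempty) (hQB : Q ⊆ t.g ⁻¹' t.B) :
    ∃ t', t ≤ t' ∧ t'.g ⁻¹' t'.B ⊆ Q := by
  obtain ⟨l, hl, hcov⟩ := exists_cover_lt hcomp hmeas hQ hQne
  have key : ∀ l : List (Set X), (∀ E ∈ l, IsClopen E ∧ ∀ μ ∈ K, μ E < μ Q) → ∀ t : Tower K,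
      Q ⊆ t.g ⁻¹' t.B → (∀ x, t.g x ∈ t.B → x ∉ Q → ∃ E ∈ l, x ∈ E) →
      ∃ t', t ≤ t' ∧ t'.g ⁻¹' t'.B ⊆ Q := by
    intro l
    induction l with
    | nil =>
      intro _ t _ h
      exact ⟨t, le_rfl, fun x hx => by
        by_contra hxQ
        simpa using h x hx hxQ⟩
    | cons E l ih =>
      intro hl t hQB h
      obtain ⟨hE, hEμ⟩ := hl E (by simp)
      have hW : IsClopen ((E ∩ t.g ⁻¹' t.B) \ Q) :=
        (hE.inter (t.hB.preimage t.g.continuous)).diff hQ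
      have hpush : ∀ W : Set X, IsClopen W → ∀ μ ∈ K, μ (t.g.symm ⁻¹' W) = μ W := by
        intro W hW μ hμ
        rw [← (t.hg μ hμ).apply_preimage (hW.preimage t.g.symm.continuous), ← preimage_comp]
        simp
      have hC' := hW.preimage t.g.symm.continuous
      have hQ' := hQ.preimage t.g.symm.continuous
      have hQB' : t.g.symm ⁻¹' Q ⊆ t.B := fun x hx => by
        have := hQB hx
        simpa using this
      obtain ⟨C, hC, hCQ, hCC⟩ := hgood _ _ hC' hQ' fun μ hμ => by
        rw [hpush _ hW μ hμ, hpush _ hQ μ hμ]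
        exact (ProbabilityMeasure.apply_mono μ (sdiff_subset.trans inter_subset_left)).trans_lt
          (hEμ μ hμ)
      obtain ⟨t', htt', -, htop, -⟩ := t.exists_stack hne hgood hmeas hC hC'
        (hCQ.trans hQB') (fun x hx => by
          have : t.g (t.g.symm x) ∈ t.B := hx.1.2
          simpa using this)
        (Set.disjoint_left.2 fun x hx hx' => hx'.2 (hCQ hx)) hCC
      obtain ⟨t'', h3, h4⟩ := ih (fun E' hE' => hl E' (by simp [hE'])) t'
        (by
          rw [htop]
          refine fun x hx => ⟨hQB hx, fun hx' => hx'.2 ?_⟩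
          simpa using hx)
        (fun x hx hxQ => by
          change x ∈ t'.g ⁻¹' t'.B at hx
          rw [htop] at hx
          obtain ⟨E', hE', hxE⟩ := h x hx.1 hxQ
          rcases List.mem_cons.1 hE' with rfl | hE'
          · refine (hx.2 ?_).elim
            rw [mem_preimage, t.g.symm_apply_apply]
            exact ⟨⟨hxE, hx.1⟩, hxQ⟩
          · exact ⟨E', hE', hxE⟩)
      exact ⟨t'', htt'.trans h3, h4⟩
  exact key l hl t hQB fun x _ _ => hcov x

/-! ### The limit homeomorphism -/

lemma Tower.apply_mem_of_le {t u : Tower K} (h : t ≤ u) {x : X} (hx : t.g x ∈ t.B) :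
    u.g x ∈ t.B := by
  by_contra hcon
  have h1 : t.g (t.g.symm (u.g x)) = u.g x := t.g.apply_symm_apply _
  have h2 := h.2 (t.g.symm (u.g x)) (by rwa [h1])
  rw [h1] at h2
  have h3 := u.g.injective h2
  rw [h3] at h1
  exact hcon (h1 ▸ hx)

lemma countable_continuousMap_int : Countable C(X, ℤ) := by
  have := secondCountable (X := X)
  have hd : DiscreteTopology C(X, ℤ) := by
    refine DiscreteTopology.of_forall_le_dist one_pos fun f h hfh => ?_
    obtain ⟨x, hx⟩ := DFunLike.ne_iff.1 hfh
    refine le_trans ?_ (ContinuousMap.dist_apply_le_dist x)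
    exact Int.pairwise_one_le_dist hx
  exact separableSpace_iff_countable.1 inferInstance

/-- The limit of an increasing sequence of towers meeting countably many requirements: bases and
tops shrink to points, which makes the climbing maps converge, and every `f` with negative
integrals over `K` eventually has nonpositive column sums. The last property passes to the limit
in the form of a coboundary dominating `f`. -/
lemma exists_limit [Nonempty X] (hne : K.Nonempty) (hcomp : IsCompact K) (hgood : Good K)
    (hmeas : ∀ μ ∈ K, Atomless μ ∧ FullSupport μ) :
    ∃ g : X ≃ₜ X, PreservesAll K g ∧ ∀ f : X → ℤ, Continuous f →
      (∀ μ ∈ K, ∫ x, (f x : ℝ) ∂(μ : Measure X) < 0) →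
      ∃ φ : X → ℤ, Continuous φ ∧ ∀ x, f x + φ x - φ (g x) ≤ 0 := by
  have := countable_clopens (X := X)
  have := countable_continuousMap_int (X := X)
  let := Encodable.ofCountable (Clopens X)
  let := Encodable.ofCountable C(X, ℤ)
  let 𝒟 : (Clopens X ⊕ Clopens X) ⊕ C(X, ℤ) → Order.Cofinal (Tower K) := fun i =>
    match i with
    | Sum.inl (Sum.inl E) => ⟨{t | t.B ⊆ E ∨ t.B ⊆ (E : Set X)ᶜ}, fun t => by
        rcases (t.B ∩ E).eq_empty_or_nonempty with h | h
        · exact ⟨t, Or.inr (disjoint_iff_inter_eq_empty.2 h).subset_compl_right, le_rfl⟩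
        · obtain ⟨t', h1, h2⟩ := t.exists_base_subset hne hcomp hgood hmeas
            (t.hB.inter E.isClopen) h inter_subset_left
          exact ⟨t', Or.inl (h2.trans inter_subset_right), h1⟩⟩
    | Sum.inl (Sum.inr F) => ⟨{t | t.g ⁻¹' t.B ⊆ F ∨ t.g ⁻¹' t.B ⊆ (F : Set X)ᶜ}, fun t => by
        rcases (t.g ⁻¹' t.B ∩ F).eq_empty_or_nonempty with h | h
        · exact ⟨t, Or.inr (disjoint_iff_inter_eq_empty.2 h).subset_compl_right, le_rfl⟩
        · obtain ⟨t', h1, h2⟩ := t.exists_top_subset hne hcomp hgood hmeas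
            ((t.hB.preimage t.g.continuous).inter F.isClopen) h inter_subset_left
          exact ⟨t', Or.inl (h2.trans inter_subset_right), h1⟩⟩
    | Sum.inr f => ⟨{t | (∀ μ ∈ K, ∫ x, (f x : ℝ) ∂(μ : Measure X) < 0) →
        ∃ φ, t.IsSum f φ ∧ ∀ x, t.excess f φ x ≤ 0}, fun t => by
        by_cases h : ∀ μ ∈ K, ∫ x, (f x : ℝ) ∂(μ : Measure X) < 0
        · obtain ⟨t', h1, h2⟩ := t.exists_excess_nonpos hne hcomp hgood hmeas f.continuous h
          exact ⟨t', fun _ => h2, h1⟩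
        · exact ⟨t, fun h' => (h h').elim, le_rfl⟩⟩
  let s : ℕ → Tower K := Order.sequenceOfCofinals (Tower.trivial K) 𝒟
  have hmono : Monotone s := Order.sequenceOfCofinals.monotone _ 𝒟
  have hmem : ∀ i, ∃ n, s n ∈ 𝒟 i := fun i => ⟨_, Order.sequenceOfCofinals.encode_mem _ 𝒟 i⟩
  -- The `n`-th tower leaves the values of the limit map open exactly on its top, which is known
  -- to be sent into its base.
  let R : ℕ → X → X → Prop := fun n x y =>
    ((s n).g x ∈ (s n).B ∧ y ∈ (s n).B) ∨ ((s n).g x ∉ (s n).B ∧ y = (s n).g x)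
  obtain ⟨g, hg, hR⟩ := exists_homeo_of_relations (K := K) R
    (fun n x y h => by
      have hle : s n ≤ s (n + 1) := hmono (Nat.le_succ n)
      by_cases hx : (s n).g x ∈ (s n).B
      · rcases h with ⟨-, h⟩ | ⟨-, rfl⟩
        · exact Or.inl ⟨hx, hle.1 h⟩
        · exact Or.inl ⟨hx, Tower.apply_mem_of_le hle hx⟩
      · have h1 := hle.2 x hx
        rcases h with ⟨h, -⟩ | ⟨-, rfl⟩
        · exact (hx (h1 ▸ hle.1 h)).elim
        · exact Or.inr ⟨hx, h1⟩)
    (fun n x => ((isClosed_const (p := (s n).g x ∈ (s n).B)).inter (s n).hB.isClosed).union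
      ((isClosed_const (p := (s n).g x ∉ (s n).B)).inter isClosed_singleton))
    (fun n x => ⟨(s n).g x, by
      by_cases hx : (s n).g x ∈ (s n).B
      · exact Or.inl ⟨hx, hx⟩
      · exact Or.inr ⟨hx, rfl⟩⟩)
    (fun n y => (((s n).hB.preimage (s n).g.continuous).isClosed.inter
        (isClosed_const (p := y ∈ (s n).B))).union
      (((s n).hB.compl.preimage (s n).g.continuous).isClosed.inter
        (isClosed_eq continuous_const (s n).g.continuous)))
    (fun n y => ⟨(s n).g.symm y, by
      have h1 : (s n).g ((s n).g.symm y) = y := (s n).g.apply_symm_apply y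
      by_cases hy : y ∈ (s n).B
      · exact Or.inl ⟨by rwa [h1], hy⟩
      · exact Or.inr ⟨by rwa [h1], h1.symm⟩⟩)
    (fun E hE => by
      obtain ⟨n, hn⟩ := hmem (Sum.inl (Sum.inl ⟨E, hE⟩))
      change (s n).B ⊆ E ∨ (s n).B ⊆ Eᶜ at hn
      refine ⟨n, (s n).g ⁻¹' E, hE.preimage (s n).g.continuous,
        fun μ hμ => ((s n).hg μ hμ).apply_preimage hE, fun x y h => ?_⟩
      rcases h with ⟨h, h'⟩ | ⟨-, rfl⟩
      · rcases hn with hn | hn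
        · exact ⟨fun _ => hn h', fun _ => hn h⟩
        · exact ⟨fun h1 => (hn h h1).elim, fun h1 => (hn h' h1).elim⟩
      · rfl)
    (fun F hF => by
      obtain ⟨n, hn⟩ := hmem (Sum.inl (Sum.inr ⟨F, hF⟩))
      change (s n).g ⁻¹' (s n).B ⊆ F ∨ (s n).g ⁻¹' (s n).B ⊆ Fᶜ at hn
      refine ⟨n, (s n).g.symm ⁻¹' F, fun x y h => ?_⟩
      rcases h with ⟨h, h'⟩ | ⟨-, rfl⟩
      · have h2 : (s n).g.symm y ∈ (s n).g ⁻¹' (s n).B := by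
          rwa [mem_preimage, (s n).g.apply_symm_apply]
        rcases hn with hn | hn
        · exact ⟨fun _ => hn h2, fun _ => hn h⟩
        · exact ⟨fun h1 => (hn h h1).elim, fun h1 => (hn h2 h1).elim⟩
      · rw [mem_preimage, (s n).g.symm_apply_apply])
  refine ⟨g, hg, fun f hf hneg => ?_⟩
  obtain ⟨n, hn⟩ := hmem (Sum.inr ⟨f, hf⟩)
  obtain ⟨φ, h1, h2⟩ : ∃ φ, (s n).IsSum f φ ∧ ∀ x, (s n).excess f φ x ≤ 0 := hn hneg
  refine ⟨φ, h1.cont, fun x => ?_⟩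
  rcases hR n x with ⟨h, h'⟩ | ⟨h, h'⟩
  · have h3 := h2 ((s n).g x)
    rw [Tower.excess, (s n).g.symm_apply_apply, h1.base _ h] at h3
    rw [h1.base _ h']
    exact h3
  · rw [h', h1.step _ h]
    omega

/-! ### Integer-valued functions separate points from `K` -/

/-- The value on finitely many clopen sets of a measure outside `K` can be separated from those of
the measures in `K` by a real linear functional; rounding a large multiple of it gives an
integer-valued function. -/
lemma exists_eq_on_finset (hcomp : IsCompact K) (hconv : ProbConvex K)
    {ν : ProbabilityMeasure X}
    (hν : ∀ f : X → ℤ, Continuous f → (∀ μ ∈ K, ∫ x, (f x : ℝ) ∂(μ : Measure X) < 0) →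
      ∫ x, (f x : ℝ) ∂(ν : Measure X) ≤ 0) (F : Finset (Clopens X)) :
    ∃ μ ∈ K, ∀ A ∈ F, (μ A : ℝ) = ν A := by
  classical
  let T : ProbabilityMeasure X → F → ℝ := fun μ A => (μ (A : Clopens X) : ℝ)
  have hT : Continuous T := continuous_pi fun A => continuous_apply_clopen A.1.isClopen
  have hTc : IsClosed (T '' K) := (hcomp.image hT).isClosed
  have hTconv : Convex ℝ (T '' K) := by
    rintro _ ⟨μ, hμ, rfl⟩ _ ⟨μ', hμ', rfl⟩ a b ha hb hab
    lift a to NNReal using ha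
    lift b to NNReal using hb
    obtain ⟨ρ, hρ, h⟩ := hconv ⟨μ, hμ, rfl⟩ ⟨μ', hμ', rfl⟩ zero_le zero_le
      (by exact_mod_cast hab)
    refine ⟨ρ, hρ, funext fun A => ?_⟩
    have h1 := congrArg (fun m : FiniteMeasure X => ((m (A : Clopens X) : NNReal) : ℝ)) h
    simpa [T] using h1
  by_contra hcon
  have hTν : T ν ∉ T '' K := by
    rintro ⟨μ, hμ, h⟩
    exact hcon ⟨μ, hμ, fun A hA => congrFun h ⟨A, hA⟩⟩
  obtain ⟨ℓ, u, hu, hu'⟩ := geometric_hahn_banach_closed_point hTconv hTc hTν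
  let c : F → ℝ := fun A => ℓ fun B => if A = B then 1 else 0
  have hℓ : ∀ y, ℓ y = ∑ A, c A * y A := by
    intro y
    have := LinearMap.pi_apply_eq_sum_univ (ℓ : (F → ℝ) →ₗ[ℝ] ℝ) y
    simp only [ContinuousLinearMap.coe_coe, smul_eq_mul] at this
    rw [this]
    exact Finset.sum_congr rfl fun A _ => mul_comm _ _
  obtain ⟨M, hM⟩ := exists_nat_gt ((Fintype.card F + 1) / (ℓ (T ν) - u))
  have hM' := (div_lt_iff₀ (sub_pos.2 hu')).1 hM
  have hM0 : (0 : ℝ) < M := lt_of_le_of_lt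
    (div_nonneg (by positivity) (sub_pos.2 hu').le) hM
  let f : X → ℤ := fun x => ∑ A : F, ⌊M * c A⌋ * (if x ∈ (A : Clopens X) then 1 else 0) - ⌈M * u⌉
  have hf : Continuous f := by
    refine (continuous_finsetSum _ fun A _ => continuous_const.mul ?_).sub continuous_const
    exact continuous_ite_clopen A.1.isClopen continuous_const continuous_const
  have hint : ∀ μ : ProbabilityMeasure X,
      ∫ x, (f x : ℝ) ∂(μ : Measure X) = ∑ A : F, (⌊M * c A⌋ : ℝ) * T μ A - ⌈M * u⌉ := by
    intro μ
    have hc : ∀ A : F, Continuous fun x : X =>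
        (⌊M * c A⌋ : ℝ) * (if x ∈ ((A : Clopens X) : Set X) then 1 else 0) := fun A =>
      continuous_const.mul
        (continuous_ite_clopen A.1.isClopen continuous_const continuous_const)
    have h1 : ∀ x, (f x : ℝ) = ∑ A : F,
        (⌊M * c A⌋ : ℝ) * (if x ∈ ((A : Clopens X) : Set X) then 1 else 0) - ⌈M * u⌉ := by
      intro x
      simp [f]
    simp_rw [h1]
    rw [integral_sub (integrable_of_continuous μ (continuous_finsetSum _ fun A _ => hc A))
      (integrable_const _),
      integral_finsetSum _ fun A _ => integrable_of_continuous μ (hc A)]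
    simp_rw [integral_const_mul]
    congr 1
    · refine Finset.sum_congr rfl fun A _ => ?_
      rw [integral_ite_clopen μ A.1.isClopen]
    · simp
  have hT0 : ∀ μ A, 0 ≤ T μ A := fun μ A => NNReal.coe_nonneg _
  have hT1 : ∀ μ A, T μ A ≤ 1 := fun μ A => by
    exact_mod_cast ProbabilityMeasure.apply_le_one μ _
  have hneg : ∀ μ ∈ K, ∫ x, (f x : ℝ) ∂(μ : Measure X) < 0 := by
    intro μ hμ
    rw [hint]
    have h1 : ∑ A : F, (⌊M * c A⌋ : ℝ) * T μ A ≤ M * ℓ (T μ) := by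
      rw [hℓ, Finset.mul_sum]
      refine Finset.sum_le_sum fun A _ => ?_
      rw [← mul_assoc]
      exact mul_le_mul_of_nonneg_right (Int.floor_le _) (hT0 μ A)
    have h2 := mul_lt_mul_of_pos_left (hu _ ⟨μ, hμ, rfl⟩) hM0
    have h3 := Int.le_ceil (M * u)
    linarith
  have hpos := hν f hf hneg
  rw [hint] at hpos
  have h1 : M * ℓ (T ν) - Fintype.card F ≤ ∑ A : F, (⌊M * c A⌋ : ℝ) * T ν A := by
    have h2 : ∑ A : F, (M * c A * T ν A - 1) ≤ ∑ A : F, (⌊M * c A⌋ : ℝ) * T ν A := by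
      refine Finset.sum_le_sum fun A _ => ?_
      have := Int.lt_floor_add_one (M * c A)
      nlinarith [hT0 ν A, hT1 ν A]
    rw [Finset.sum_sub_distrib] at h2
    simp only [mul_assoc, ← Finset.mul_sum, ← hℓ] at h2
    simpa using h2
  have h2 := Int.ceil_lt_add_one (M * u)
  linarith

lemma mem_of_forall_integral (hcomp : IsCompact K) (hconv : ProbConvex K)
    {ν : ProbabilityMeasure X}
    (hν : ∀ f : X → ℤ, Continuous f → (∀ μ ∈ K, ∫ x, (f x : ℝ) ∂(μ : Measure X) < 0) →
      ∫ x, (f x : ℝ) ∂(ν : Measure X) ≤ 0) : ν ∈ K := by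
  obtain ⟨μ, hμ, h⟩ := hcomp.inter_iInter_nonempty
    (fun A : Clopens X => {μ : ProbabilityMeasure X | (μ A : ℝ) = ν A})
    (fun A => isClosed_eq (continuous_apply_clopen A.isClopen) continuous_const)
    (fun F => by
      obtain ⟨μ, hμ, h⟩ := exists_eq_on_finset hcomp hconv hν F
      exact ⟨μ, hμ, mem_iInter₂.2 h⟩)
  have : ν = μ := probabilityMeasure_ext_clopen fun E hE => by
    have h1 : (μ E : ℝ) = ν E := mem_iInter.1 h ⟨E, hE⟩
    exact_mod_cast h1.symm
  exact this ▸ hμ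

/-! ### Minimality and invariant measures -/

lemma Preserves.integral_nonpos {g : X ≃ₜ X} {ν : ProbabilityMeasure X} (h : Preserves g ν)
    {f φ : X → ℤ} (hf : Continuous f) (hφ : Continuous φ)
    (hle : ∀ x, f x + φ x - φ (g x) ≤ 0) : ∫ x, (f x : ℝ) ∂(ν : Measure X) ≤ 0 := by
  have hφ' := continuous_intCast hφ
  have i1 := integrable_of_continuous ν hφ'
  have i2 : Integrable (fun x => (φ (g x) : ℝ)) (ν : Measure X) :=
    integrable_of_continuous ν (hφ'.comp g.continuous)
  have h1 := integral_mono (integrable_of_continuous ν (continuous_intCast hf)) (i2.sub i1)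
    (fun x => by
      have : f x ≤ φ (g x) - φ x := by have := hle x; omega
      have h2 : (f x : ℝ) ≤ φ (g x) - φ x := by exact_mod_cast this
      exact h2)
  have h2 := integral_sub i2 i1
  rw [h.integral_comp hφ', sub_self] at h2
  exact h1.trans_eq h2

/-- Applied to `f = 1 - M • 1_V` with `M` large, the domination property bounds the time an orbit
can spend outside a nonempty clopen set `V`. -/
lemma isMinimal_of_dominated (hcomp : IsCompact K) (hmeas : ∀ μ ∈ K, Atomless μ ∧ FullSupport μ)
    {g : X ≃ₜ X}
    (hdom : ∀ f : X → ℤ, Continuous f → (∀ μ ∈ K, ∫ x, (f x : ℝ) ∂(μ : Measure X) < 0) →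
      ∃ φ : X → ℤ, Continuous φ ∧ ∀ x, f x + φ x - φ (g x) ≤ 0) : IsMinimal g := by
  classical
  intro x
  refine dense_iff_inter_open.2 fun U hU hUne => ?_
  obtain ⟨y, hy⟩ := hUne
  obtain ⟨V, hV, hyV, hVU⟩ := compact_exists_isClopen_in_isOpen hU hy
  obtain ⟨c, hc, hcV⟩ := exists_pos_lower_bound hcomp (continuous_apply_clopen hV)
    (fun μ hμ => by exact_mod_cast (hmeas μ hμ).2 V hV.isOpen ⟨y, hyV⟩)
  obtain ⟨M, hM⟩ := exists_nat_gt (1 / c)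
  have hM' := (div_lt_iff₀ hc).1 hM
  have hcont : Continuous fun x => (M : ℝ) * (if x ∈ V then 1 else 0) :=
    continuous_const.mul (continuous_ite_clopen hV continuous_const continuous_const)
  obtain ⟨φ, hφ, hle⟩ := hdom (fun x => 1 - M * (if x ∈ V then 1 else 0))
    (continuous_const.sub (continuous_const.mul
      (continuous_ite_clopen hV continuous_const continuous_const)))
    (fun μ hμ => by
      have h1 : ∀ x, (((1 : ℤ) - M * (if x ∈ V then 1 else 0) : ℤ) : ℝ) =
          1 - (M : ℝ) * (if x ∈ V then 1 else 0) := fun x => by push_cast; rfl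
      simp_rw [h1]
      rw [integral_sub (integrable_const _) (integrable_of_continuous μ hcont),
        integral_const_mul, integral_ite_clopen μ hV]
      have h2 := mul_le_mul_of_nonneg_left (hcV μ hμ) (Nat.cast_nonneg (α := ℝ) M)
      simp only [integral_const, probReal_univ, smul_eq_mul, mul_one]
      linarith)
  by_contra hcon
  have hout : ∀ n : ℤ, (g.toEquiv ^ n) x ∉ V := fun n hn => hcon ⟨_, hVU hn, n, rfl⟩
  have hgrow : ∀ n : ℕ, φ x + n ≤ φ ((g.toEquiv ^ (n : ℤ)) x) := by
    intro n
    induction n with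
    | zero => simp
    | succ n ih =>
      have h1 := hle ((g.toEquiv ^ (n : ℤ)) x)
      have h2 : (g.toEquiv ^ ((n + 1 : ℕ) : ℤ)) x = g ((g.toEquiv ^ (n : ℤ)) x) := by
        rw [zpow_natCast, zpow_natCast, pow_succ']
        rfl
      rw [if_neg (hout n)] at h1
      rw [h2]
      push_cast
      linarith
  obtain ⟨D, hD⟩ := exists_int_bound hφ
  have h1 := hgrow (2 * D + 1)
  have h2 := abs_le.1 (hD x)
  have h3 := abs_le.1 (hD ((g.toEquiv ^ ((2 * D + 1 : ℕ) : ℤ)) x))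
  push_cast at h1 h3
  linarith

end Construction

end DynSimplex
theorem dahl_finite_dimensional
    {X : Type*} [TopologicalSpace X] [CompactSpace X]
    [TopologicalSpace.MetrizableSpace X] [TotallyDisconnectedSpace X] [PerfectSpace X]
    [Nonempty X] [MeasurableSpace X] [BorelSpace X]
    (K : Set (MeasureTheory.ProbabilityMeasure X)) (hne : K.Nonempty)
    (hcomp : IsCompact K) (hconv : DynSimplex.ProbConvex K)
    (hmeas : ∀ μ ∈ K, DynSimplex.Atomless μ ∧ DynSimplex.FullSupport μ)
    (hgood : DynSimplex.Good K)
    (hfin : (DynSimplex.ProbExtremePoints K).Finite) :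
    ∃ g : X ≃ₜ X, DynSimplex.IsMinimal g ∧
      {μ : MeasureTheory.ProbabilityMeasure X | DynSimplex.Preserves g μ} = K := by
  obtain ⟨g, hg, hdom⟩ := DynSimplex.exists_limit hne hcomp hgood hmeas
  refine ⟨g, DynSimplex.isMinimal_of_dominated hcomp hmeas hdom,
    Set.Subset.antisymm (fun ν hν => ?_) hg⟩
  refine DynSimplex.mem_of_forall_integral hcomp hconv fun f hf hneg => ?_
  obtain ⟨φ, hφ, hle⟩ := hdom f hf hneg
  exact DynSimplex.Preserves.integral_nonpos hν hf hφ hle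
end

section
/- Let X be a Cantor space and K a dynamical simplex on X. Then for every continuous function f : X → [0,1] and every ε > 0 there exists a clopen set B ⊆ X such that |∫_X f dμ − μ(B)| ≤ ε for every μ ∈ K; that is, every affine function on K of the form μ ↦ ∫_X f dμ with f ∈ C(X,[0,1]) can be uniformly approximated on K by functions of the form μ ↦ μ(B) with B clopen. -/
/-!
Since `X` is profinite, `f` is uniformly close to a constant `c i ∈ [0, 1]` on each piece `A i` of
some finite clopen partition, so it suffices to find, inside a single clopen set `A`, a clopen set
whose measure is uniformly close to `c * μ A` (`exists_clopen_approx_smul`). Approximate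
divisibility provides a clopen `B ⊆ A` with `n * μ B` just below `μ A`, and goodness allows one to
pack disjoint `K`-equivalent copies of `B` into `A` one after the other (`exists_clopen_multiple`):
as long as `j + 1 < n`, the part of `A` left over by `j` copies has measure at least
`(n - j) * μ B > μ B`. The union of about `c * n` copies is the required set.
-/

open MeasureTheory

namespace DynSimplex

section Aux

variable {X : Type*} [TopologicalSpace X] [MeasurableSpace X] [BorelSpace X]

/-- Goodness allows one to pack `p < n` disjoint `K`-equivalent copies of `B` into `A` as soon as
`n * μ B ≤ μ A` for all `μ ∈ K`. Full support supplies the strict inequality `μ B > 0` needed to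
apply goodness; an empty `B` is trivial. -/
theorem exists_clopen_multiple {K : Set (ProbabilityMeasure X)} (hgood : Good K)
    (hfull : ∀ μ ∈ K, FullSupport μ) {A B : Set X} (hA : IsClopen A) (hB : IsClopen B) (n : ℕ)
    (hn : ∀ μ ∈ K, (n : ℝ) * (μ B : ℝ) ≤ (μ A : ℝ)) (p : ℕ) (hp : p < n) :
    ∃ C : Set X, IsClopen C ∧ C ⊆ A ∧ ∀ μ ∈ K, (μ C : ℝ) = (p : ℝ) * (μ B : ℝ) := by
  rcases B.eq_empty_or_nonempty with rfl | hne
  · exact ⟨∅, isClopen_empty, Set.empty_subset _, fun μ _ => by simp⟩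
  induction p with
  | zero => exact ⟨∅, isClopen_empty, Set.empty_subset _, fun μ _ => by simp⟩
  | succ p ih =>
    obtain ⟨C, hC, hCA, hCμ⟩ := ih (by omega)
    have hdiff : ∀ μ : ProbabilityMeasure X, (μ (A \ C) : ℝ) = (μ A : ℝ) - (μ C : ℝ) := by
      intro μ
      simp only [← ProbabilityMeasure.measureReal_eq_coe_coeFn]
      exact measureReal_sdiff hCA hC.isOpen.measurableSet
    have hlt : ∀ μ ∈ K, μ B < μ (A \ C) := by
      intro μ hμ
      have hpos : (0 : ℝ) < μ B := by exact_mod_cast hfull μ hμ B hB.isOpen hne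
      have hpn : (p : ℝ) + 2 ≤ n := by exact_mod_cast hp
      have h1 := hn μ hμ
      have h2 := hCμ μ hμ
      have h3 := hdiff μ
      rw [← NNReal.coe_lt_coe]
      nlinarith [mul_le_mul_of_nonneg_right hpn hpos.le]
    obtain ⟨D, hD, hDsub, hDμ⟩ := hgood B (A \ C) hB (hA.diff hC) hlt
    refine ⟨C ∪ D, hC.union hD, Set.union_subset hCA (hDsub.trans Set.sdiff_subset), ?_⟩
    intro μ hμ
    have hdisj : Disjoint C D := Set.disjoint_sdiff_right.mono_right hDsub
    have hunion : (μ (C ∪ D) : ℝ) = (μ C : ℝ) + (μ D : ℝ) := by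
      simp only [← ProbabilityMeasure.measureReal_eq_coe_coeFn]
      exact measureReal_union hdisj hD.isOpen.measurableSet
    rw [hunion, hCμ μ hμ, hDμ μ hμ]
    push_cast
    ring

/-- The local form of the approximation: the affine function `μ ↦ c * μ A` is uniformly close on
`K` to `μ ↦ μ C` for some clopen `C ⊆ A`. -/
theorem exists_clopen_approx_smul {K : Set (ProbabilityMeasure X)} (hgood : Good K)
    (hdiv : ApproximatelyDivisible K) (hfull : ∀ μ ∈ K, FullSupport μ) {A : Set X}
    (hA : IsClopen A) {c : ℝ} (hc : c ∈ Set.Icc (0 : ℝ) 1) {δ : ℝ} (hδ : 0 < δ) :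
    ∃ C : Set X, IsClopen C ∧ C ⊆ A ∧ ∀ μ ∈ K, |c * (μ A : ℝ) - (μ C : ℝ)| ≤ δ := by
  obtain ⟨hc0, hc1⟩ := hc
  obtain ⟨m, hm⟩ := exists_nat_gt (4 / δ)
  have hmδ : 4 ≤ δ * m := by
    rw [div_lt_iff₀ hδ] at hm
    linarith
  obtain ⟨B, hB, -, hBμ⟩ := hdiv A hA (m + 1) (by omega) (δ / 2) (by positivity)
  -- Rounding down `c * m` rather than `c * (m + 1)` guarantees `p < m + 1` also when `c = 1`.
  set p : ℕ := ⌊c * m⌋₊ with hpdef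
  have hpm : (p : ℝ) ≤ c * m := Nat.floor_le (by positivity)
  have hmp : c * m < p + 1 := Nat.lt_floor_add_one _
  have hp : p < m + 1 := by
    have : (p : ℝ) ≤ m := hpm.trans (mul_le_of_le_one_left (by positivity) hc1)
    exact Nat.lt_succ_of_le (by exact_mod_cast this)
  obtain ⟨C, hC, hCA, hCμ⟩ :=
    exists_clopen_multiple hgood hfull hA hB (m + 1) (fun μ hμ => (hBμ μ hμ).2) p hp
  refine ⟨C, hC, hCA, fun μ hμ => ?_⟩
  obtain ⟨h1, h2⟩ := hBμ μ hμ
  rw [hCμ μ hμ]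
  push_cast at h1 h2
  have hb0 : (0 : ℝ) ≤ μ B := NNReal.coe_nonneg _
  have ha1 : (μ A : ℝ) ≤ 1 := by exact_mod_cast μ.apply_le_one A
  generalize (μ A : ℝ) = a at *
  generalize (μ B : ℝ) = b at *
  have hm0 : (0 : ℝ) ≤ m := Nat.cast_nonneg m
  -- Since `m * b ≤ 1` and `m` is large, `b` itself is small, which absorbs the rounding error.
  have hb : 4 * b ≤ δ := by
    have h3 : m * b ≤ 1 := by nlinarith
    nlinarith [mul_le_mul_of_nonneg_right hmδ hb0, mul_le_mul_of_nonneg_left h3 hδ.le]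
  have h4 := mul_le_mul_of_nonneg_right hpm hb0
  have h5 := mul_le_mul_of_nonneg_right hmp.le hb0
  have h6 := mul_le_mul_of_nonneg_left h1 hc0
  have h7 := mul_le_mul_of_nonneg_left h2 hc0
  have h8 : c * b ≤ b := mul_le_of_le_one_left hb0 hc1
  have h9 : 0 ≤ c * b := mul_nonneg hc0 hb0
  have h10 : c * δ ≤ δ := mul_le_of_le_one_left hδ.le hc1
  rw [abs_le]
  constructor <;> nlinarith

end Aux

end DynSimplex

theorem integral_approx_by_clopen
    {X : Type*} [TopologicalSpace X] [CompactSpace X]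
    [TopologicalSpace.MetrizableSpace X] [TotallyDisconnectedSpace X] [PerfectSpace X]
    [Nonempty X] [MeasurableSpace X] [BorelSpace X]
    (K : Set (MeasureTheory.ProbabilityMeasure X)) (hK : DynSimplex.DynamicalSimplex K)
    (f : X → ℝ) (hf : Continuous f) (hf01 : ∀ x, f x ∈ Set.Icc (0 : ℝ) 1)
    (ε : ℝ) (hε : 0 < ε) :
    ∃ B : Set X, IsClopen B ∧
      ∀ μ ∈ K, |(∫ x, f x ∂(μ : MeasureTheory.Measure X)) - (μ B : ℝ)| ≤ ε := by
  obtain ⟨-, -, -, hfa, hgood, hdiv⟩ := hK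
  have hfull : ∀ μ ∈ K, DynSimplex.FullSupport μ := fun μ hμ => (hfa μ hμ).2
  have hS : {q : ℝ × ℝ | dist q.1 q.2 < ε / 2} ∈ nhdsSet (Set.diagonal ℝ) :=
    nhdsSet_diagonal_le_uniformity (Metric.dist_mem_uniformity (half_pos hε))
  obtain ⟨k, A, hAne, hAosc, hAcov, hAdisj⟩ :=
    ContinuousMap.exists_disjoint_nonempty_clopen_cover_of_mem_nhds_diagonal
      (⟨f, hf⟩ : C(X, ℝ)) hS
  have hr : ∀ i, ∃ x, x ∈ A i := by
    intro i
    by_contra h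
    push Not at h
    exact hAne i (le_bot_iff.mp fun x hx => h x hx)
  choose r hr using hr
  have hδ : 0 < ε / (2 * ((k : ℝ) + 1)) := by positivity
  choose B hB hBA hBμ using fun i =>
    DynSimplex.exists_clopen_approx_smul hgood hdiv hfull (A i).isClopen (hf01 (r i)) hδ
  have hAset : Pairwise (Function.onFun Disjoint fun i => (A i : Set X)) := by
    intro i j hij
    exact TopologicalSpace.Clopens.coe_disjoint.mpr (hAdisj hij)
  have hBset : Pairwise (Function.onFun Disjoint B) := fun i j hij =>
    (hAset hij).mono (hBA i) (hBA j)
  refine ⟨⋃ i, B i, isClopen_iUnion_of_finite hB, fun μ hμ => ?_⟩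
  have hAmeas : ∀ i, MeasurableSet (A i : Set X) := fun i => (A i).isOpen.measurableSet
  have hAun : (⋃ i, (A i : Set X)) = Set.univ := Set.univ_subset_iff.mp hAcov
  have hint : Integrable f (μ : Measure X) := by
    refine Integrable.of_bound hf.aestronglyMeasurable 1 (Filter.Eventually.of_forall fun x => ?_)
    rw [Real.norm_eq_abs, abs_of_nonneg (hf01 x).1]
    exact (hf01 x).2
  have hsum_int : ∫ x, f x ∂(μ : Measure X) = ∑ i, ∫ x in (A i : Set X), f x ∂(μ : Measure X) := by
    rw [← integral_iUnion_fintype hAmeas hAset fun i => hint.integrableOn, hAun,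
      Measure.restrict_univ]
  have hsum_B : (μ (⋃ i, B i) : ℝ) = ∑ i, (μ (B i) : ℝ) := by
    simp only [← ProbabilityMeasure.measureReal_eq_coe_coeFn]
    exact measureReal_iUnion_fintype hBset fun i => (hB i).isOpen.measurableSet
  have hsum_A : ∑ i, (μ (A i) : ℝ) = 1 := by
    have h := measureReal_iUnion_fintype (μ := (μ : Measure X)) hAset hAmeas
    rw [hAun, probReal_univ] at h
    simpa only [← ProbabilityMeasure.measureReal_eq_coe_coeFn] using h.symm
  have hpiece : ∀ i, |(∫ x in (A i : Set X), f x ∂(μ : Measure X)) - (μ (B i) : ℝ)|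
      ≤ ε / 2 * (μ (A i) : ℝ) + ε / (2 * ((k : ℝ) + 1)) := by
    intro i
    have h1 : |(∫ x in (A i : Set X), f x ∂(μ : Measure X)) - f (r i) * (μ (A i) : ℝ)|
        ≤ ε / 2 * (μ (A i) : ℝ) := by
      have h2 : ∫ x in (A i : Set X), (f x - f (r i)) ∂(μ : Measure X)
          = (∫ x in (A i : Set X), f x ∂(μ : Measure X)) - f (r i) * (μ (A i) : ℝ) := by
        rw [integral_sub hint.integrableOn (integrable_const _), setIntegral_const, smul_eq_mul,
          mul_comm, ProbabilityMeasure.measureReal_eq_coe_coeFn]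
      rw [← h2, ← Real.norm_eq_abs, ← ProbabilityMeasure.measureReal_eq_coe_coeFn]
      exact norm_setIntegral_le_of_norm_le_const (measure_lt_top _ _)
        fun x hx => (hAosc i x hx (r i) (hr i)).le
    exact (abs_sub_le _ _ _).trans (add_le_add h1 (hBμ i μ hμ))
  rw [hsum_int, hsum_B, ← Finset.sum_sub_distrib]
  calc |∑ i, ((∫ x in (A i : Set X), f x ∂(μ : Measure X)) - (μ (B i) : ℝ))|
      ≤ ∑ i, |(∫ x in (A i : Set X), f x ∂(μ : Measure X)) - (μ (B i) : ℝ)| :=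
        Finset.abs_sum_le_sum_abs _ _
    _ ≤ ∑ i, (ε / 2 * (μ (A i) : ℝ) + ε / (2 * ((k : ℝ) + 1))) :=
        Finset.sum_le_sum fun i _ => hpiece i
    _ = ε / 2 + k * (ε / (2 * ((k : ℝ) + 1))) := by
        rw [Finset.sum_add_distrib, ← Finset.mul_sum, hsum_A]
        simp
    _ ≤ ε := by
        have : (k : ℝ) * (ε / (2 * ((k : ℝ) + 1))) ≤ ε / 2 := by
          rw [← mul_div_assoc, div_le_div_iff₀ (by positivity) (by norm_num)]
          nlinarith
        linarith
end
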